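/- Let A_n ~ GOE(n) for each n. Then (1/(2n)) max_{C ∈ ℰ_n} ⟨A_n, C⟩ converges to 1 in probability as n → ∞, i.e., for every ε > 0, P(|(1/(2n)) max_{C ∈ ℰ_n} ⟨A_n, C⟩ − 1| > ε) → 0. -/

import Mathlib

open MeasureTheory ProbabilityTheory Filter
open scoped NNReal ENNReal

noncomputable section

/-- A random symmetric matrix `A : Ω → (Fin n → Fin n → ℝ)` has the `GOE(n)` distribution:
entries are measurable, the matrix is symmetric, the upper-triangular entries (including the
diagonal) are independent, diagonal entries are `N(0, 2/n)` and off-diagonal entries are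
`N(0, 1/n)`. -/
def IsGOE {Ω : Type*} [MeasurableSpace Ω] (μ : Measure Ω) (n : ℕ)
    (A : Ω → Fin n → Fin n → ℝ) : Prop :=
  (∀ i j, Measurable fun ω => A ω i j) ∧
  (∀ ω, ∀ i j, A ω i j = A ω j i) ∧
  iIndepFun
    (fun (p : {p : Fin n × Fin n // p.1 ≤ p.2}) => fun ω => A ω p.1.1 p.1.2) μ ∧
  (∀ i : Fin n, μ.map (fun ω => A ω i i) = gaussianReal 0 (2 / (n : ℝ≥0))) ∧
  (∀ i j : Fin n, i < j → μ.map (fun ω => A ω i j) = gaussianReal 0 (1 / (n : ℝ≥0)))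

/-- The point of the hypercube `{-1,1}^n` indexed by a Boolean vector. -/
def signVec {n : ℕ} (b : Fin n → Bool) : Fin n → ℝ := fun i => if b i then 1 else -1


/-- The elliptope `ℰ_n`: symmetric positive semidefinite matrices with unit diagonal. -/
def elliptope (n : ℕ) : Set (Matrix (Fin n) (Fin n) ℝ) :=
  {C | C.PosSemidef ∧ ∀ i, C i i = 1}


abbrev Mat (n : ℕ) := Fin n → Fin n → ℝ

def qf {n : ℕ} (B : Mat n) (x : Fin n → ℝ) : ℝ := ∑ i, ∑ j, x i * B i j * x j
def nsq {n : ℕ} (x : Fin n → ℝ) : ℝ := ∑ i, x i ^ 2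
def rk1 {n : ℕ} (v : Fin n → ℝ) : Mat n := fun i j => v i * v j
def dot {n : ℕ} (v x : Fin n → ℝ) : ℝ := ∑ i, v i * x i

def Good {n : ℕ} (m : ℕ) (t : ℝ) (B : Mat n) : Prop :=
  ∃ L : (Fin m → ℝ) →ₗ[ℝ] (Fin n → ℝ), ∀ y, y ≠ 0 → t * nsq (L y) < qf B (L y)

def asm {n : ℕ} (g : ℝ) (b : Fin n → ℝ) (G : Mat n) : Mat (n + 1) :=
  Fin.cons (Fin.cons g b) (fun i => Fin.cons (b i) (G i))

def conjM {n : ℕ} (O : Mat n) (G : Mat n) : Mat n :=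
  fun i j => ∑ k, ∑ l, O i k * G k l * O j l

lemma nsq_nonneg {n : ℕ} (x : Fin n → ℝ) : 0 ≤ nsq x := Finset.sum_nonneg fun _ _ => sq_nonneg _

lemma qf_add {n : ℕ} (A B : Mat n) (x) : qf (A + B) x = qf A x + qf B x := by
  simp [qf, mul_add, add_mul, Finset.sum_add_distrib]

lemma qf_smul {n : ℕ} (c : ℝ) (B : Mat n) (x) : qf (c • B) x = c * qf B x := by
  simp only [qf, Finset.mul_sum, Pi.smul_apply, smul_eq_mul]
  refine Finset.sum_congr rfl fun i _ => Finset.sum_congr rfl fun j _ => by ring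

lemma qf_rk1 {n : ℕ} (v x : Fin n → ℝ) : qf (rk1 v) x = (dot v x) ^ 2 := by
  simp only [qf, rk1, dot, sq, Finset.sum_mul_sum]
  refine Finset.sum_congr rfl fun i _ => Finset.sum_congr rfl fun j _ => by ring

lemma qf_asm {n : ℕ} (g : ℝ) (b : Fin n → ℝ) (G : Mat n) (x0 : ℝ) (x : Fin n → ℝ) :
    qf (asm g b G) (Fin.cons x0 x) = g * x0 ^ 2 + 2 * x0 * dot b x + qf G x := by
  simp only [qf, asm, dot, Fin.sum_univ_succ, Fin.cons_zero, Fin.cons_succ,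
    Finset.sum_add_distrib]
  have h1 : ∑ i, x i * b i * x0 = x0 * ∑ i, b i * x i := by
    rw [Finset.mul_sum]; exact Finset.sum_congr rfl fun i _ => by ring
  have h2 : ∑ i, x0 * b i * x i = x0 * ∑ i, b i * x i := by
    rw [Finset.mul_sum]; exact Finset.sum_congr rfl fun i _ => by ring
  rw [h1, h2]; ring

lemma nsq_cons {n : ℕ} (x0 : ℝ) (x : Fin n → ℝ) :
    nsq (Fin.cons x0 x : Fin (n+1) → ℝ) = x0 ^ 2 + nsq x := by
  simp [nsq, Fin.sum_univ_succ]

def e0 {n : ℕ} : Fin (n + 1) → ℝ := Fin.cons 1 0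

lemma dot_e0 {n : ℕ} (x0 : ℝ) (x : Fin n → ℝ) : dot e0 (Fin.cons x0 x) = x0 := by
  simp [dot, e0, Fin.sum_univ_succ]

lemma good_mono {n m : ℕ} {t : ℝ} {A B : Mat n} (h : ∀ x, qf A x ≤ qf B x) (hA : Good m t A) :
    Good m t B := by
  obtain ⟨L, hL⟩ := hA
  exact ⟨L, fun y hy => (hL y hy).trans_le (h _)⟩

lemma good_zero {n : ℕ} {t : ℝ} (A : Mat n) : Good 0 t A :=
  ⟨0, fun y hy => absurd (Subsingleton.elim y 0) hy⟩

/-- Schur complement identity -/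
lemma schur {n : ℕ} (g s t : ℝ) (b : Fin n → ℝ) (G : Mat n) (x0 : ℝ) (x : Fin n → ℝ)
    (hd : t - g - s ≠ 0) :
    qf (asm g b G + s • rk1 e0) (Fin.cons x0 x) - t * nsq (Fin.cons x0 x : Fin (n+1) → ℝ) =
      -(t - g - s) * (x0 - dot b x / (t - g - s)) ^ 2
        + (qf (G + (1 / (t - g - s)) • rk1 b) x - t * nsq x) := by
  rw [qf_add, qf_smul, qf_rk1, qf_asm, nsq_cons, dot_e0, qf_add, qf_smul, qf_rk1]
  field_simp
  ring

def dotL {n : ℕ} (b : Fin n → ℝ) : (Fin n → ℝ) →ₗ[ℝ] ℝ where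
  toFun x := dot b x
  map_add' x y := by simp [dot, mul_add, Finset.sum_add_distrib]
  map_smul' c x := by
    simp only [dot, Pi.smul_apply, smul_eq_mul, RingHom.id_apply, Finset.mul_sum]
    exact Finset.sum_congr rfl fun i _ => by ring

lemma dotL_apply {n : ℕ} (b x : Fin n → ℝ) : dotL b x = dot b x := rfl

def consL {n : ℕ} {E : Type*} [AddCommGroup E] [Module ℝ E]
    (f : E →ₗ[ℝ] ℝ) (L : E →ₗ[ℝ] (Fin n → ℝ)) : E →ₗ[ℝ] (Fin (n+1) → ℝ) where
  toFun x := Fin.cons (f x) (L x)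
  map_add' x y := by
    ext i; refine Fin.cases ?_ (fun i => ?_) i <;> simp
  map_smul' c x := by
    ext i; refine Fin.cases ?_ (fun i => ?_) i <;> simp

/-- one step, no new direction -/
lemma good_step {n m : ℕ} (g s t : ℝ) (b : Fin n → ℝ) (G : Mat n) (hd : t - g - s ≠ 0)
    (h : Good m t (G + (1 / (t - g - s)) • rk1 b)) :
    Good m t (asm g b G + s • rk1 e0) := by
  obtain ⟨L, hL⟩ := h
  refine ⟨consL ((1 / (t - g - s)) • (dotL b).comp L) L, fun y hy => ?_⟩
  have := hL y hy
  have h2 := schur g s t b G (dot b (L y) / (t - g - s)) (L y) hd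
  have h3 : consL ((1 / (t - g - s)) • (dotL b).comp L) L y
      = Fin.cons (dot b (L y) / (t - g - s)) (L y) := by
    simp [consL, dotL_apply, div_eq_inv_mul]
  rw [h3]
  simp only [sub_self] at h2
  nlinarith

lemma good_step_succ {n m : ℕ} (g s t : ℝ) (b : Fin n → ℝ) (G : Mat n) (hd : t - g - s < 0)
    (h : Good m t (G + (1 / (t - g - s)) • rk1 b)) :
    Good (m + 1) t (asm g b G + s • rk1 e0) := by
  obtain ⟨L, hL⟩ := h
  let T : (Fin (m+1) → ℝ) →ₗ[ℝ] (Fin m → ℝ) := LinearMap.funLeft ℝ ℝ Fin.succ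
  refine ⟨consL ((LinearMap.proj 0) + (1 / (t - g - s)) • ((dotL b).comp (L.comp T))) (L.comp T),
    fun y hy => ?_⟩
  have h2 := schur g s t b G (y 0 + dot b (L (T y)) / (t - g - s)) (L (T y)) hd.ne
  have h3 : consL ((LinearMap.proj 0) + (1 / (t - g - s)) • ((dotL b).comp (L.comp T))) (L.comp T) y
      = Fin.cons (y 0 + dot b (L (T y)) / (t - g - s)) (L (T y)) := by
    simp [consL, dotL_apply, div_eq_inv_mul]
  rw [h3]
  simp only [add_sub_cancel_right] at h2
  by_cases hT : T y = 0
  · have hy0 : y 0 ≠ 0 := by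
      intro h0
      apply hy
      ext i
      refine Fin.cases h0 (fun j => ?_) i
      exact congrFun hT j
    have h5 : qf (G + (1 / (t - g - s)) • rk1 b) (L (T y)) - t * nsq (L (T y)) = 0 := by
      rw [hT, map_zero]; simp [qf, nsq]
    have : 0 < (y 0)^2 := by positivity
    nlinarith
  · have := hL _ hT
    nlinarith [mul_nonneg (neg_nonneg.2 hd.le) (sq_nonneg (y 0))]

lemma good_one {n : ℕ} {t : ℝ} {B : Mat n} : Good 1 t B ↔ ∃ x, t * nsq x < qf B x := by
  constructor
  · rintro ⟨L, hL⟩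
    exact ⟨_, hL (fun _ => 1) (by intro h; simpa using congrFun h 0)⟩
  · rintro ⟨x, hx⟩
    refine ⟨(LinearMap.proj 0 : (Fin 1 → ℝ) →ₗ[ℝ] ℝ).smulRight x, fun y hy => ?_⟩
    have hy0 : y 0 ≠ 0 := by
      intro h0; apply hy; ext i; rw [Subsingleton.elim i 0]; exact h0
    have h1 : nsq (y 0 • x) = (y 0)^2 * nsq x := by
      simp [nsq, mul_pow, Finset.mul_sum]
    have h2 : qf B (y 0 • x) = (y 0)^2 * qf B x := by
      simp only [qf, Finset.mul_sum, Pi.smul_apply, smul_eq_mul]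
      exact Finset.sum_congr rfl fun i _ => Finset.sum_congr rfl fun j _ => by ring
    simp only [LinearMap.smulRight_apply, LinearMap.proj_apply, h1, h2]
    have : 0 < (y 0)^2 := by positivity
    nlinarith

/-- upper step -/
lemma good_one_step {n : ℕ} (g s t : ℝ) (b : Fin n → ℝ) (G : Mat n) (hd : 0 < t - g - s)
    (h : Good 1 t (asm g b G + s • rk1 e0)) : Good 1 t (G + (1 / (t - g - s)) • rk1 b) := by
  rw [good_one] at *
  obtain ⟨x, hx⟩ := h
  refine ⟨Fin.tail x, ?_⟩
  have h2 := schur g s t b G (x 0) (Fin.tail x) hd.ne'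
  rw [Fin.cons_self_tail] at h2
  nlinarith [mul_nonneg hd.le (sq_nonneg (x 0 - dot b (Fin.tail x) / (t - g - s)))]

/-! conjugation -/
def IsOrth {n : ℕ} (O : Mat n) : Prop := ∀ i j, ∑ k, O i k * O j k = if i = j then 1 else 0

def vM {n : ℕ} (O : Mat n) : (Fin n → ℝ) →ₗ[ℝ] (Fin n → ℝ) := Matrix.mulVecLin (Matrix.of O)

lemma IsOrth.mul {n : ℕ} {O : Mat n} (h : IsOrth O) :
    (Matrix.of O) * (Matrix.of O).transpose = 1 := by
  ext i j
  simp [Matrix.mul_apply, h i j, Matrix.one_apply]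

lemma IsOrth.mul' {n : ℕ} {O : Mat n} (h : IsOrth O) :
    (Matrix.of O).transpose * (Matrix.of O) = 1 := mul_eq_one_comm.1 h.mul

lemma IsOrth.transpose {n : ℕ} {O : Mat n} (h : IsOrth O) : IsOrth (fun i j => O j i) := by
  intro i j
  have := congrFun (congrFun h.mul' i) j
  simpa [Matrix.mul_apply, Matrix.one_apply] using this

lemma dotP {n : ℕ} (x y : Fin n → ℝ) : dot x y = dotProduct x y := rfl
lemma nsqP {n : ℕ} (x : Fin n → ℝ) : nsq x = dotProduct x x := by simp [nsq, dotProduct, sq]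
lemma qfP {n : ℕ} (B : Mat n) (x : Fin n → ℝ) : qf B x = dotProduct x (Matrix.mulVec (Matrix.of B) x) := by
  simp only [qf, dotProduct, Matrix.mulVec, Finset.mul_sum]
  exact Finset.sum_congr rfl fun i _ => Finset.sum_congr rfl fun j _ => by simp; ring
lemma conjP {n : ℕ} (O G : Mat n) :
    Matrix.of (conjM O G) = Matrix.of O * Matrix.of G * (Matrix.of O).transpose := by
  ext i j
  simp only [conjM, Matrix.mul_apply, Matrix.of_apply, Matrix.transpose_apply, Finset.sum_mul]
  rw [Finset.sum_comm]

lemma dot_vM {n : ℕ} {O : Mat n} (h : IsOrth O) (x y : Fin n → ℝ) :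
    dotProduct (vM O x) (vM O y) = dotProduct x y := by
  rw [vM, Matrix.mulVecLin_apply, Matrix.mulVecLin_apply, Matrix.dotProduct_mulVec,
    Matrix.vecMul_mulVec, h.mul', Matrix.vecMul_one]

lemma nsq_vM {n : ℕ} {O : Mat n} (h : IsOrth O) (x) : nsq (vM O x) = nsq x := by
  rw [nsqP, nsqP, dot_vM h]

lemma qf_conj {n : ℕ} {O : Mat n} (h : IsOrth O) (B) (x) : qf (conjM O B) (vM O x) = qf B x := by
  rw [qfP, qfP, conjP]
  have : Matrix.mulVec (Matrix.of O * Matrix.of B * (Matrix.of O).transpose) (vM O x)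
      = vM O (Matrix.mulVec (Matrix.of B) x) := by
    simp only [vM, Matrix.mulVecLin_apply, Matrix.mulVec_mulVec]
    rw [Matrix.mul_assoc, Matrix.mul_assoc, h.mul', Matrix.mul_one]
  rw [this, dot_vM h]

lemma good_conj {n m : ℕ} {t : ℝ} {O : Mat n} (h : IsOrth O) {B : Mat n} (hB : Good m t B) :
    Good m t (conjM O B) := by
  obtain ⟨L, hL⟩ := hB
  refine ⟨(vM O).comp L, fun y hy => ?_⟩
  simp only [LinearMap.comp_apply, nsq_vM h, qf_conj h]
  exact hL y hy

lemma conj_conj {n : ℕ} {O : Mat n} (h : IsOrth O) (B : Mat n) :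
    conjM (fun i j => O j i) (conjM O B) = B := by
  have : Matrix.of (conjM (fun i j => O j i) (conjM O B)) = Matrix.of B := by
    rw [conjP, conjP]
    have : Matrix.of (fun i j => O j i) = (Matrix.of O).transpose := rfl
    rw [this, Matrix.transpose_transpose]
    have h1 := h.mul'
    calc _ = ((Matrix.of O).transpose * (Matrix.of O)) * Matrix.of B * ((Matrix.of O).transpose * (Matrix.of O)) := by
          simp only [Matrix.mul_assoc]
      _ = _ := by rw [h1]; simp
  exact this

lemma good_conj_iff {n m : ℕ} {t : ℝ} {O : Mat n} (h : IsOrth O) {B : Mat n} :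
    Good m t (conjM O B) ↔ Good m t B := by
  refine ⟨fun hB => ?_, good_conj h⟩
  have := good_conj h.transpose hB
  rwa [conj_conj h] at this

lemma conj_add {n : ℕ} (O A B : Mat n) : conjM O (A + B) = conjM O A + conjM O B := by
  ext i j; simp [conjM, mul_add, add_mul, Finset.sum_add_distrib]
lemma conj_smul {n : ℕ} (O : Mat n) (c : ℝ) (B : Mat n) : conjM O (c • B) = c • conjM O B := by
  ext i j
  simp only [conjM, Pi.smul_apply, smul_eq_mul, Finset.mul_sum]
  exact Finset.sum_congr rfl fun i _ => Finset.sum_congr rfl fun j _ => by ring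
lemma conj_rk1 {n : ℕ} (O : Mat n) (v : Fin n → ℝ) : conjM O (rk1 v) = rk1 (vM O v) := by
  ext i j
  simp only [conjM, rk1, vM, Matrix.mulVecLin_apply, Matrix.mulVec, dotProduct, Matrix.of_apply,
    Finset.sum_mul_sum]
  exact Finset.sum_congr rfl fun i _ => Finset.sum_congr rfl fun j _ => by ring

/-! orthogonal matrices with prescribed rows -/
lemma exists_orth {n : ℕ} (s : Set (Fin n)) (v : Fin n → (Fin n → ℝ))
    (hv : ∀ i ∈ s, ∀ j ∈ s, dot (v i) (v j) = if i = j then 1 else 0) :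
    ∃ O : Mat n, IsOrth O ∧ ∀ i ∈ s, O i = v i := by
  let w : Fin n → EuclideanSpace ℝ (Fin n) := fun i => WithLp.toLp 2 (v i)
  have hin : ∀ i j, inner ℝ (w i) (w j) = dot (v i) (v j) := by
    intro i j
    simp [w, PiLp.inner_apply, dot, mul_comm]
  have hw : Orthonormal ℝ (s.domRestrict w) := by
    rw [orthonormal_iff_ite]
    rintro ⟨i, hi⟩ ⟨j, hj⟩
    have := hin i j
    rw [hv i hi j hj] at this
    simpa using this
  obtain ⟨b, hb⟩ := hw.exists_orthonormalBasis_extension_of_card_eq (by simp)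
  refine ⟨fun i => b i, fun i j => ?_, fun i hi => ?_⟩
  · have := orthonormal_iff_ite.1 b.orthonormal i j
    rw [← this]
    simp [PiLp.inner_apply, mul_comm]
  · change (b i).ofLp = v i
    rw [hb i hi]

lemma exists_orth_e0 {n : ℕ} (u : Fin (n+1) → ℝ) (hu : nsq u = 1) :
    ∃ O : Mat (n+1), IsOrth O ∧ vM O u = e0 := by
  obtain ⟨O, hO, h⟩ := exists_orth {0} (fun _ => u) (by
    intro i hi j hj
    rw [Set.mem_singleton_iff] at hi hj
    subst hi; subst hj
    simpa [dotP, nsqP] using hu)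
  refine ⟨O, hO, ?_⟩
  have hu' : O 0 = u := h 0 rfl
  ext i
  have : vM O u i = ∑ k, O i k * O 0 k := by
    rw [hu']; simp [vM, Matrix.mulVec, dotProduct]
  rw [this, hO]
  refine Fin.cases ?_ (fun i => ?_) i <;> simp [e0]

/-! openness -/
lemma continuous_qf {n : ℕ} : Continuous fun p : Mat n × (Fin n → ℝ) => qf p.1 p.2 := by
  unfold qf; fun_prop
lemma continuous_nsq {n : ℕ} : Continuous fun p : (Fin n → ℝ) => nsq p := by
  unfold nsq; fun_prop

lemma isOpen_good (n m : ℕ) (t : ℝ) : IsOpen {B : Mat n | Good m t B} := by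
  have : {B : Mat n | Good m t B} = ⋃ L : (Fin m → ℝ) →ₗ[ℝ] (Fin n → ℝ),
      {B | ∀ y, y ≠ 0 → t * nsq (L y) < qf B (L y)} := by
    ext B; simp [Good]
  rw [this]
  refine isOpen_iUnion fun L => ?_
  have hLc : Continuous L := L.continuous_of_finiteDimensional
  have : {B : Mat n | ∀ y, y ≠ 0 → t * nsq (L y) < qf B (L y)} =
      {B : Mat n | ∀ y ∈ Metric.sphere (0 : Fin m → ℝ) 1, t * nsq (L y) < qf B (L y)} := by
    ext B
    constructor
    · intro h y hy
      exact h y (by rintro rfl; simp at hy)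
    · intro h y hy
      have hn : 0 < ‖y‖ := norm_pos_iff.2 hy
      have := h (‖y‖⁻¹ • y) (by simp [norm_smul, hn.ne'])
      have h1 : nsq (L (‖y‖⁻¹ • y)) = (‖y‖⁻¹)^2 * nsq (L y) := by
        simp [nsq, mul_pow, Finset.mul_sum]
      have h2 : qf B (L (‖y‖⁻¹ • y)) = (‖y‖⁻¹)^2 * qf B (L y) := by
        simp only [qf, Finset.mul_sum, Pi.smul_apply, smul_eq_mul, map_smul]
        exact Finset.sum_congr rfl fun i _ => Finset.sum_congr rfl fun j _ => by ring
      rw [h1, h2] at this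
      have hp : 0 < (‖y‖⁻¹)^2 := by positivity
      have h3 : (‖y‖⁻¹)^2 * (t * nsq (L y)) < (‖y‖⁻¹)^2 * qf B (L y) := by linarith
      exact lt_of_mul_lt_mul_left h3 hp.le
  rw [this, isOpen_iff_mem_nhds]
  intro B hB
  refine (isCompact_sphere (0 : Fin m → ℝ) 1).eventually_forall_of_forall_eventually ?_
  intro y hy
  have hc1 : Continuous fun p : Mat n × (Fin m → ℝ) => t * nsq (L p.2) :=
    continuous_const.mul (continuous_nsq.comp (hLc.comp continuous_snd))
  have hc2 : Continuous fun p : Mat n × (Fin m → ℝ) => qf p.1 (L p.2) :=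
    continuous_qf.comp (continuous_fst.prodMk (hLc.comp continuous_snd))
  exact (isOpen_lt hc1 hc2).mem_nhds (hB y hy)


def tr2 {n : ℕ} (T G : Mat n) : ℝ := ∑ i, ∑ j, T i j * G i j
def sq2 {n : ℕ} (T : Mat n) : ℝ := (∑ i, ∑ j, (T i j + T j i) ^ 2) / 4

def nu : (n : ℕ) → Measure (Mat n)
  | 0 => Measure.dirac 0
  | n + 1 => ((gaussianReal 0 2).prod ((Measure.pi fun _ : Fin n => gaussianReal 0 1).prod (nu n))).map
      (fun p => asm p.1 p.2.1 p.2.2)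

lemma measurable_asm (n : ℕ) :
    Measurable (fun p : ℝ × (Fin n → ℝ) × Mat n => asm p.1 p.2.1 p.2.2) := by
  refine measurable_pi_iff.2 fun i => measurable_pi_iff.2 fun j => ?_
  refine Fin.cases ?_ (fun i => ?_) i <;> refine Fin.cases ?_ (fun j => ?_) j <;>
    simp only [asm, Fin.cons_zero, Fin.cons_succ] <;> fun_prop

instance (n : ℕ) : IsProbabilityMeasure (nu n) := by
  induction n with
  | zero => exact inferInstanceAs (IsProbabilityMeasure (Measure.dirac _))
  | succ n ih =>
    exact Measure.isProbabilityMeasure_map (measurable_asm n).aemeasurable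

def IsG {n : ℕ} (m : Measure (Mat n)) : Prop :=
  ∀ T : Mat n, ∫ G, Complex.exp ((tr2 T G : ℝ) * Complex.I) ∂m = Complex.exp (-(sq2 T : ℝ))

lemma tr2P {n : ℕ} (T G : Mat n) :
    tr2 T G = Matrix.trace ((Matrix.of T).transpose * Matrix.of G) := by
  simp only [tr2, Matrix.trace, Matrix.diag, Matrix.mul_apply, Matrix.transpose_apply,
    Matrix.of_apply]
  rw [Finset.sum_comm]

lemma tr2_conj {n : ℕ} (O T G : Mat n) : tr2 T (conjM O G) = tr2 (conjM (fun i j => O j i) T) G := by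
  rw [tr2P, tr2P, conjP, conjP]
  have : Matrix.of (fun i j => O j i) = (Matrix.of O).transpose := rfl
  rw [this]
  simp only [Matrix.transpose_mul, Matrix.transpose_transpose, Matrix.mul_assoc]
  rw [← Matrix.mul_assoc, ← Matrix.mul_assoc, Matrix.trace_mul_comm]
  simp only [Matrix.mul_assoc]

lemma measurable_tr2 {n : ℕ} (T : Mat n) : Measurable (tr2 T) := by
  unfold tr2; fun_prop

lemma IsG.unique {n : ℕ} {m m' : Measure (Mat n)} [IsFiniteMeasure m] [IsFiniteMeasure m']
    (h : IsG m) (h' : IsG m') : m = m' := by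
  apply Measure.ext_of_charFunDual
  ext L
  obtain ⟨T, hL⟩ : ∃ T, ∀ G : Mat n, L G = tr2 T G := by
    refine ⟨fun i j => L (Pi.single i (Pi.single j 1)), fun G => ?_⟩
    have hG : G = ∑ i, ∑ j, G i j • (Pi.single i (Pi.single j 1) : Mat n) := by
      ext a b
      simp [Finset.sum_apply, Pi.single_apply, Finset.sum_ite_eq, ite_apply]
    conv_lhs => rw [hG]
    simp [tr2, mul_comm]
  simp only [charFunDual_apply, hL]
  rw [h, h']

lemma gauss_cf (v : ℝ≥0) (t : ℝ) :
    ∫ x, Complex.exp ((t * x : ℝ) * Complex.I) ∂(gaussianReal 0 v) = Complex.exp (-(v * t^2/2 : ℝ)) := by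
  have := charFun_gaussianReal (μ := 0) (v := v) t
  rw [charFun_apply_real] at this
  push_cast
  rw [this]
  congr 1
  push_cast; ring

lemma gauss_pi_cf {n : ℕ} (t : Fin n → ℝ) :
    ∫ x, Complex.exp ((dot t x : ℝ) * Complex.I) ∂(Measure.pi fun _ : Fin n => gaussianReal 0 1)
      = Complex.exp (-((∑ i, t i ^ 2) / 2 : ℝ)) := by
  have h : ∀ x : Fin n → ℝ, Complex.exp ((dot t x : ℝ) * Complex.I)
      = ∏ i, Complex.exp ((t i * x i : ℝ) * Complex.I) := by
    intro x
    rw [← Complex.exp_sum]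
    simp [dot, Finset.sum_mul]
  simp_rw [h]
  rw [integral_fintype_prod_eq_prod (f := fun i (x : ℝ) => Complex.exp ((t i * x : ℝ) * Complex.I))]
  simp_rw [gauss_cf]
  rw [← Complex.exp_sum]
  congr 1
  push_cast
  simp [Finset.sum_div]

lemma tr2_asm {n : ℕ} (T : Mat (n+1)) (g : ℝ) (b : Fin n → ℝ) (G : Mat n) :
    tr2 T (asm g b G) = T 0 0 * g + (dot (fun i => T 0 i.succ + T i.succ 0) b
      + tr2 (fun i j => T i.succ j.succ) G) := by
  simp [tr2, asm, dot, Fin.sum_univ_succ, Finset.sum_add_distrib, add_mul]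
  ring

lemma sq2_succ {n : ℕ} (T : Mat (n+1)) :
    sq2 T = 2 * (T 0 0)^2/2 + ((∑ i : Fin n, (T 0 i.succ + T i.succ 0)^2)/2
      + sq2 (fun i j : Fin n => T i.succ j.succ)) := by
  simp only [sq2, Fin.sum_univ_succ, Finset.sum_add_distrib]
  have : ∑ i : Fin n, (T i.succ 0 + T 0 i.succ)^2 = ∑ i : Fin n, (T 0 i.succ + T i.succ 0)^2 :=
    Finset.sum_congr rfl fun i _ => by ring
  rw [this]; ring

lemma isG_nu (n : ℕ) : IsG (nu n) := by
  induction n with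
  | zero =>
    intro T
    simp [nu, tr2, sq2]
  | succ n ih =>
    intro T
    rw [nu, integral_map (measurable_asm n).aemeasurable
      (by have := measurable_tr2 T; fun_prop)]
    simp only [tr2_asm]
    push_cast
    simp only [add_mul, Complex.exp_add]
    rw [integral_prod_mul (f := fun g : ℝ => Complex.exp ((T 0 0 : ℂ) * g * Complex.I))
      (g := fun p : (Fin n → ℝ) × Mat n => Complex.exp ((dot (fun i => T 0 i.succ + T i.succ 0) p.1 : ℝ) * Complex.I) *
        Complex.exp ((tr2 (fun i j => T i.succ j.succ) p.2 : ℝ) * Complex.I)),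
      integral_prod_mul (f := fun b => Complex.exp ((dot (fun i => T 0 i.succ + T i.succ 0) b : ℝ) * Complex.I))
        (g := fun G => Complex.exp ((tr2 (fun i j => T i.succ j.succ) G : ℝ) * Complex.I)),
      ih, gauss_pi_cf]
    have := gauss_cf 2 (T 0 0)
    push_cast at this
    rw [this, ← Complex.exp_add, ← Complex.exp_add, sq2_succ]
    congr 1
    push_cast
    ring

lemma sq2_conj {n : ℕ} {O : Mat n} (h : IsOrth O) (T : Mat n) : sq2 (conjM O T) = sq2 T := by
  have h1 : ∀ T : Mat n, sq2 T = tr2 (T + fun i j => T j i) (T + fun i j => T j i) / 4 := by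
    intro T; simp [sq2, tr2, sq]
  have h2 : (fun i j => conjM O T j i) = conjM O (fun i j => T j i) := by
    ext i j
    simp only [conjM]
    rw [Finset.sum_comm]
    exact Finset.sum_congr rfl fun i _ => Finset.sum_congr rfl fun j _ => by ring
  rw [h1, h1 T, h2, ← conj_add, tr2_conj, conj_conj h]

lemma continuous_conj {n : ℕ} (O : Mat n) : Continuous (conjM O) := by
  unfold conjM; fun_prop

lemma nu_conj {n : ℕ} {O : Mat n} (h : IsOrth O) : (nu n).map (conjM O) = nu n := by
  have : IsProbabilityMeasure ((nu n).map (conjM O)) :=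
    Measure.isProbabilityMeasure_map (continuous_conj O).measurable.aemeasurable
  refine IsG.unique (fun T => ?_) (isG_nu n)
  rw [integral_map (continuous_conj O).measurable.aemeasurable
      (by have := measurable_tr2 T; fun_prop)]
  simp only [tr2_conj]
  rw [isG_nu, sq2_conj h.transpose]

lemma nu_neg {n : ℕ} : (nu n).map (fun G => -G) = nu n := by
  have : IsProbabilityMeasure ((nu n).map (fun G => -G)) :=
    Measure.isProbabilityMeasure_map measurable_neg.aemeasurable
  refine IsG.unique (fun T => ?_) (isG_nu n)
  rw [integral_map measurable_neg.aemeasurable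
      (by have := measurable_tr2 T; fun_prop)]
  have : ∀ G : Mat n, tr2 T (-G) = tr2 (-T) G := by intro G; simp [tr2]
  simp only [this]
  rw [isG_nu]
  have : sq2 (-T) = sq2 T := by
    simp only [sq2, Pi.neg_apply]
    congr 1
    exact Finset.sum_congr rfl fun i _ => Finset.sum_congr rfl fun j _ => by ring
  rw [this]


lemma sum_upper {n : ℕ} (f : Fin n → Fin n → ℝ) :
    ∑ i, ∑ j, f i j = ∑ p : {p : Fin n × Fin n // p.1 ≤ p.2},
      (if p.1.1 = p.1.2 then f p.1.1 p.1.2 else f p.1.1 p.1.2 + f p.1.2 p.1.1) := by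
  have h0 : ∑ i, ∑ j, f i j = ∑ p : Fin n × Fin n, f p.1 p.2 := by
    rw [Fintype.sum_prod_type]
  rw [h0, ← Finset.sum_filter_add_sum_filter_not Finset.univ (fun p : Fin n × Fin n => p.1 ≤ p.2)]
  have h1 : ∑ p : Fin n × Fin n with ¬ p.1 ≤ p.2, f p.1 p.2
      = ∑ p : Fin n × Fin n with p.1 ≤ p.2, (if p.1 = p.2 then 0 else f p.2 p.1) := by
    have : ∑ p : Fin n × Fin n with p.1 ≤ p.2, (if p.1 = p.2 then 0 else f p.2 p.1)
      = ∑ p : Fin n × Fin n with p.1 < p.2, f p.2 p.1 := by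
      rw [Finset.sum_filter, Finset.sum_filter]
      refine Finset.sum_congr rfl fun p _ => ?_
      by_cases h : p.1 = p.2
      · simp [h]
      · simp [h, lt_iff_le_and_ne]
    rw [this]
    refine Finset.sum_bij' (fun p _ => p.swap) (fun p _ => p.swap) ?_ ?_ ?_ ?_ ?_ <;> simp
  rw [h1, ← Finset.sum_add_distrib]
  rw [Finset.sum_subtype (p := fun p : Fin n × Fin n => p.1 ≤ p.2) (F := inferInstance) _ (by simp)]
  refine Finset.sum_congr rfl fun p _ => ?_
  split_ifs <;> simp

lemma gauss_cf_map {Ω : Type*} [MeasurableSpace Ω] {μ : Measure Ω} {X : Ω → ℝ} (hX : Measurable X)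
    {v : ℝ≥0} (h : μ.map X = gaussianReal 0 v) (t : ℝ) :
    ∫ ω, Complex.exp ((t * X ω : ℝ) * Complex.I) ∂μ = Complex.exp (-(v * t^2/2 : ℝ)) := by
  rw [← gauss_cf, ← h, integral_map hX.aemeasurable (by fun_prop)]

lemma law_A {Ω : Type*} [MeasurableSpace Ω] (μ : Measure Ω) [IsProbabilityMeasure μ] (n : ℕ)
    (hn : 1 ≤ n) (A : Ω → Fin n → Fin n → ℝ) (h : IsGOE μ n A) :
    μ.map (fun ω => √(n : ℝ) • A ω) = nu n := by
  obtain ⟨hm, hs, hi, hd, ho⟩ := h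
  have hn0 : (0 : ℝ) < n := by exact_mod_cast hn
  have hmA : Measurable (fun ω => √(n : ℝ) • A ω) := by
    refine measurable_pi_iff.2 fun i => measurable_pi_iff.2 fun j => ?_
    exact (hm i j).const_mul _
  have : IsProbabilityMeasure (μ.map (fun ω => √(n : ℝ) • A ω)) :=
    Measure.isProbabilityMeasure_map hmA.aemeasurable
  refine IsG.unique (fun T => ?_) (isG_nu n)
  rw [integral_map hmA.aemeasurable (by have := measurable_tr2 T; fun_prop)]
  let c : {p : Fin n × Fin n // p.1 ≤ p.2} → ℝ := fun p =>
    if p.1.1 = p.1.2 then √n * T p.1.1 p.1.2 else √n * (T p.1.1 p.1.2 + T p.1.2 p.1.1)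
  have h1 : ∀ ω, tr2 T (√(n : ℝ) • A ω) = ∑ p, c p * A ω p.1.1 p.1.2 := by
    intro ω
    rw [tr2, sum_upper]
    refine Finset.sum_congr rfl fun p _ => ?_
    simp only [c, Pi.smul_apply, smul_eq_mul]
    split_ifs with h
    · ring
    · rw [hs ω p.1.2 p.1.1]; ring
  have h2 : ∀ ω, Complex.exp ((tr2 T (√(n : ℝ) • A ω) : ℝ) * Complex.I)
      = ∏ p, Complex.exp ((c p * A ω p.1.1 p.1.2 : ℝ) * Complex.I) := by
    intro ω
    rw [← Complex.exp_sum, h1]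
    simp [Finset.sum_mul]
  simp_rw [h2]
  rw [hi.integral_fun_prod_comp (f := fun p (x : ℝ) => Complex.exp ((c p * x : ℝ) * Complex.I))
    (fun p => (hm _ _).aemeasurable) (fun p => by fun_prop)]
  have h3 : ∀ p : {p : Fin n × Fin n // p.1 ≤ p.2},
      ∫ ω, Complex.exp ((c p * A ω p.1.1 p.1.2 : ℝ) * Complex.I) ∂μ
      = Complex.exp (-((if p.1.1 = p.1.2 then (T p.1.1 p.1.2 + T p.1.2 p.1.1)^2/4 else
        (T p.1.1 p.1.2 + T p.1.2 p.1.1)^2/4 + (T p.1.2 p.1.1 + T p.1.1 p.1.2)^2/4 : ℝ))) := by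
    rintro ⟨⟨i, j⟩, hij⟩
    have hsq : (√(n:ℝ))^2 = n := Real.sq_sqrt hn0.le
    by_cases h : i = j
    · subst h
      rw [gauss_cf_map (hm i i) (hd i)]
      simp only [c, if_true, mul_pow, hsq]
      congr 3
      push_cast
      field_simp
      ring
    · rw [gauss_cf_map (hm i j) (ho i j (lt_of_le_of_ne hij h))]
      simp only [c, h, if_false, mul_pow, hsq]
      congr 3
      push_cast
      field_simp
      ring
  simp_rw [h3]
  rw [← Complex.exp_sum]
  congr 1
  rw [sq2, Finset.sum_div]
  simp_rw [Finset.sum_div]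
  rw [sum_upper]
  push_cast
  rw [Finset.sum_neg_distrib]


lemma gauss_sq_mgf (l : ℝ) (hl : l ≤ 1/8) :
    ∫ x, Real.exp (l * (x^2 - 1)) ∂(gaussianReal 0 1) = Real.exp (-l) / √(1 - 2*l) := by
  rw [integral_gaussianReal_eq_integral_smul (by simp)]
  have h : ∀ x : ℝ, gaussianPDFReal 0 1 x • Real.exp (l * (x^2 - 1))
      = ((√(2 * Real.pi))⁻¹ * Real.exp (-l)) * Real.exp (-(1/2 - l) * x^2) := by
    intro x
    simp only [gaussianPDFReal, smul_eq_mul, NNReal.coe_one, mul_one, sub_zero]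
    rw [mul_assoc, mul_assoc, ← Real.exp_add, ← Real.exp_add]
    congr 2; ring
  simp_rw [h]
  rw [integral_const_mul, integral_gaussian]
  have h1 : Real.pi / (1/2 - l) = (2 * Real.pi) / (1 - 2 * l) := by
    have : (1/2 - l) ≠ 0 := by linarith
    have : (1 - 2*l) ≠ 0 := by linarith
    field_simp
  rw [h1, Real.sqrt_div (by positivity)]
  have : √(2 * Real.pi) ≠ 0 := by positivity
  field_simp

lemma key_ineq (y : ℝ) (h1 : y ≤ 1/4) : 1 ≤ (1 - y) * Real.exp (y + y^2) := by
  rcases le_total y 0 with h | h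
  · have := Real.add_one_le_exp (y + y^2)
    nlinarith [mul_nonneg (neg_nonneg.2 h) (sq_nonneg y)]
  · have := Real.quadratic_le_exp_of_nonneg (x := y + y^2) (by positivity)
    have h2 : 1 + y + 3/2 * y^2 ≤ Real.exp (y + y^2) := by
      nlinarith [mul_nonneg h (sq_nonneg y), mul_nonneg (sq_nonneg y) (sq_nonneg y)]
    nlinarith [sq_nonneg y]

lemma gauss_sq_mgf_le (l : ℝ) (hl : l ≤ 1/8) :
    Real.exp (-l) / √(1 - 2*l) ≤ Real.exp (2 * l^2) := by
  have hp : 0 < 1 - 2*l := by linarith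
  rw [div_le_iff₀ (by positivity)]
  have h := key_ineq (2*l) (by linarith)
  have h2 : Real.exp (2*l + (2*l)^2) = Real.exp (l + 2*l^2) ^ 2 := by
    rw [← Real.exp_nat_mul]; congr 1; push_cast; ring
  have h3 : 1 ≤ √(1 - 2*l) * Real.exp (l + 2*l^2) := by
    have e : √(1-2*l)*Real.exp (l+2*l^2) = √((1-2*l)*Real.exp (l+2*l^2)^2) := by
      rw [Real.sqrt_mul hp.le, Real.sqrt_sq (Real.exp_pos _).le]
    rw [e]
    exact Real.one_le_sqrt.2 (by rw [← h2]; exact h)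
  have h4 : Real.exp (l + 2*l^2) = Real.exp (2*l^2) * Real.exp l := by
    rw [← Real.exp_add]; congr 1; ring
  rw [Real.exp_neg, inv_le_iff_one_le_mul₀ (Real.exp_pos _)]
  rw [h4] at h3
  linarith

abbrev gpi (n : ℕ) : Measure (Fin n → ℝ) := Measure.pi fun _ : Fin n => gaussianReal 0 1

lemma nsq_mgf (n : ℕ) (l : ℝ) (hl : l ≤ 1/8) :
    ∫ b, Real.exp (l * (nsq b - n)) ∂(gpi n) = (Real.exp (-l) / √(1 - 2*l)) ^ n := by
  have h : ∀ b : Fin n → ℝ, Real.exp (l * (nsq b - n)) = ∏ i, Real.exp (l * (b i ^ 2 - 1)) := by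
    intro b
    rw [← Real.exp_sum, ← Finset.mul_sum]
    simp [nsq]
  simp_rw [h]
  rw [integral_fintype_prod_eq_prod (f := fun _ (x : ℝ) => Real.exp (l * (x^2 - 1)))]
  simp [gauss_sq_mgf l hl, div_pow]

lemma nsq_tail (n N : ℕ) (hnN : n ≤ N) (δ : ℝ) (hδ : 0 < δ) (hδ1 : δ ≤ 1) (σ : ℝ) (hσ : σ = 1 ∨ σ = -1) :
    (gpi n).real {b | δ * N ≤ σ * (nsq b - n)} ≤ Real.exp (-(δ^2/16) * N) := by
  have hl : σ * δ/8 ≤ 1/8 := by rcases hσ with rfl | rfl <;> linarith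
  have hI := nsq_mgf n (σ * δ/8) hl
  have hpos : 0 < Real.exp (-(σ*δ/8)) / √(1 - 2*(σ*δ/8)) :=
    div_pos (Real.exp_pos _) (Real.sqrt_pos.2 (by linarith))
  have hint : Integrable (fun b => Real.exp (σ*δ/8 * (nsq b - n))) (gpi n) := by
    by_contra hc
    rw [integral_undef hc] at hI
    exact (pow_pos hpos n).ne hI
  have h1 := measure_ge_le_exp_mul_mgf (μ := gpi n) (X := fun b => σ * (nsq b - n)) (t := δ/8) (δ * N)
    (by positivity) (by
      convert hint using 3; ring)
  refine h1.trans ?_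
  have h2 : mgf (fun b : Fin n → ℝ => σ * (nsq b - n)) (gpi n) (δ/8) ≤ Real.exp (2 * (σ*δ/8)^2) ^ n := by
    rw [mgf]
    have : ∀ b : Fin n → ℝ, Real.exp (δ/8 * (σ * (nsq b - n))) = Real.exp (σ*δ/8 * (nsq b - n)) := by
      intro b; congr 1; ring
    simp_rw [this]
    rw [hI]
    exact pow_le_pow_left₀ hpos.le (gauss_sq_mgf_le _ hl) n
  refine (mul_le_mul_of_nonneg_left h2 (Real.exp_pos _).le).trans ?_
  rw [← Real.exp_nat_mul, ← Real.exp_add]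
  apply Real.exp_le_exp.2
  have hs : σ^2 = 1 := by rcases hσ with rfl | rfl <;> norm_num
  have hnN' : (n : ℝ) ≤ N := by exact_mod_cast hnN
  have e : (n : ℝ) * (2 * (σ*δ/8)^2) = n * (δ^2/32) := by
    have : (σ*δ/8)^2 = δ^2/64 := by rw [div_pow, mul_pow, hs]; ring
    rw [this]; ring
  rw [e]
  have := mul_le_mul_of_nonneg_right hnN' (by positivity : 0 ≤ δ^2/32)
  nlinarith [mul_nonneg (Nat.cast_nonneg (α := ℝ) N) (sq_nonneg δ)]

lemma g_tail (N : ℕ) (δ : ℝ) (hδ : 0 < δ) (σ : ℝ) (hσ : σ = 1 ∨ σ = -1) :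
    (gaussianReal 0 2).real {g | δ * √N ≤ σ * g} ≤ Real.exp (-(δ^2/16) * N) := by
  have h1 := measure_ge_le_exp_mul_mgf (μ := gaussianReal 0 2) (X := fun b => σ * b) (t := δ * √N/2) (δ * √N)
    (by positivity) (by
      have := integrable_exp_mul_gaussianReal (μ := 0) (v := 2) (δ * √N/2 * σ)
      convert this using 3; ring)
  refine h1.trans ?_
  have h2 : mgf (fun b => σ * b) (gaussianReal 0 2) (δ * √N/2) = Real.exp ((δ * √N/2)^2) := by
    have := mgf_gaussianReal (p := gaussianReal 0 2) (X := id) (μ := 0) (v := 2) (by simp) (σ * (δ * √N/2))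
    rw [mgf] at this ⊢
    have hs : σ^2 = 1 := by rcases hσ with rfl | rfl <;> norm_num
    rw [mul_pow, hs] at this
    convert this using 2
    · ext x; simp only [id]; congr 1; ring
    · push_cast; ring
  rw [h2, ← Real.exp_add]
  apply Real.exp_le_exp.2
  have : (√(N:ℝ))^2 = N := Real.sq_sqrt (Nat.cast_nonneg _)
  have h3 : (δ * √N/2)^2 = δ^2 * N / 4 := by rw [div_pow, mul_pow, this]; ring
  have h4 : (δ * √N/2) * (δ * √N) = δ^2 * N / 2 := by
    have : (δ * √N/2) * (δ * √N) = δ^2 * (√N)^2/2 := by ring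
    rw [this, Real.sq_sqrt (Nat.cast_nonneg _)]
  nlinarith [mul_nonneg (Nat.cast_nonneg (α := ℝ) N) (sq_nonneg δ)]

def OK (N n : ℕ) (δ : ℝ) (g : ℝ) (b : Fin n → ℝ) : Prop :=
  |g| < δ * √N ∧ |nsq b - n| < δ * N

def pN (N : ℕ) (δ : ℝ) : ℝ≥0∞ := ENNReal.ofReal (4 * Real.exp (-(δ^2/16) * N))

lemma not_ok_le (n N : ℕ) (hnN : n ≤ N) (δ : ℝ) (hδ : 0 < δ) (hδ1 : δ ≤ 1) :
    ((gaussianReal 0 2).prod (gpi n)) {p | ¬ OK N n δ p.1 p.2} ≤ pN N δ := by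
  have hsub : {p : ℝ × (Fin n → ℝ) | ¬ OK N n δ p.1 p.2} ⊆
      (({g | δ * √N ≤ 1 * g} ×ˢ Set.univ) ∪ ({g | δ * √N ≤ (-1) * g} ×ˢ Set.univ)) ∪
      ((Set.univ ×ˢ {b | δ * N ≤ 1 * (nsq b - n)}) ∪ (Set.univ ×ˢ {b | δ * N ≤ (-1) * (nsq b - n)})) := by
    rintro ⟨g, b⟩ h
    simp only [OK, Set.mem_setOf_eq, not_and_or, not_lt, le_abs] at h
    simp only [Set.mem_union, Set.mem_prod, Set.mem_univ, Set.mem_setOf_eq, and_true, true_and,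
      one_mul, neg_one_mul]
    tauto
  refine (measure_mono hsub).trans ?_
  refine (measure_union_le _ _).trans ?_
  refine (add_le_add (measure_union_le _ _) (measure_union_le _ _)).trans ?_
  simp only [Measure.prod_prod, measure_univ, mul_one, one_mul (_ : ℝ≥0∞)]
  have e : pN N δ = (ENNReal.ofReal (Real.exp (-(δ^2/16) * N)) + ENNReal.ofReal (Real.exp (-(δ^2/16) * N)))
     + (ENNReal.ofReal (Real.exp (-(δ^2/16) * N)) + ENNReal.ofReal (Real.exp (-(δ^2/16) * N))) := by
    rw [← ENNReal.ofReal_add (by positivity) (by positivity),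
      ← ENNReal.ofReal_add (by positivity) (by positivity), pN]
    congr 1; ring
  rw [e]
  have conv : ∀ {α : Type} [MeasurableSpace α] (m : Measure α) [IsProbabilityMeasure m] (s : Set α) (r : ℝ),
      m.real s ≤ r → m s ≤ ENNReal.ofReal r := by
    intro α _ m _ s r h
    rw [← ofReal_measureReal]
    exact ENNReal.ofReal_le_ofReal h
  exact add_le_add (add_le_add (conv _ _ _ (g_tail N δ hδ 1 (Or.inl rfl)))
    (conv _ _ _ (g_tail N δ hδ (-1) (Or.inr rfl))))
    (add_le_add (conv _ _ _ (nsq_tail n N hnN δ hδ hδ1 1 (Or.inl rfl)))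
    (conv _ _ _ (nsq_tail n N hnN δ hδ hδ1 (-1) (Or.inr rfl))))

lemma pN_tendsto (δ : ℝ) (hδ : 0 < δ) : Tendsto (fun N : ℕ => N * pN N δ) atTop (nhds 0) := by
  have h1 : Tendsto (fun x : ℝ => x * Real.exp (-(δ^2/16) * x)) atTop (nhds 0) := by
    have := tendsto_rpow_mul_exp_neg_mul_atTop_nhds_zero 1 (δ^2/16) (by positivity)
    simpa using this
  have h2 : Tendsto (fun N : ℕ => ENNReal.ofReal (4 * ((N:ℝ) * Real.exp (-(δ^2/16) * N)))) atTop (nhds 0) := by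
    have := ENNReal.tendsto_ofReal ((h1.comp tendsto_natCast_atTop_atTop).const_mul 4)
    simpa using this
  refine h2.congr fun N => ?_
  rw [pN, ← ENNReal.ofReal_natCast N, ← ENNReal.ofReal_mul (by positivity)]
  congr 1; ring


lemma nu_step (n N : ℕ) (hnN : n ≤ N) (δ : ℝ) (hδ : 0 < δ) (hδ1 : δ ≤ 1) (Bad : Set (Mat (n+1)))
    (hB : MeasurableSet Bad) (q : ℝ≥0∞)
    (h : ∀ g b, OK N n δ g b → nu n {G | asm g b G ∈ Bad} ≤ q) :
    nu (n+1) Bad ≤ pN N δ + q := by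
  have hOK : MeasurableSet {p : ℝ × (Fin n → ℝ) | ¬ OK N n δ p.1 p.2} := by
    have h1 : Measurable fun p : ℝ × (Fin n → ℝ) => nsq p.2 := continuous_nsq.measurable.comp measurable_snd
    apply MeasurableSet.compl
    have m1 : MeasurableSet {p : ℝ × (Fin n → ℝ) | |p.1| < δ * √N} :=
      measurableSet_lt (by fun_prop) (by fun_prop)
    have m2 : MeasurableSet {p : ℝ × (Fin n → ℝ) | |nsq p.2 - n| < δ * N} :=
      measurableSet_lt (by fun_prop) (by fun_prop)
    exact m1.inter m2
  refine le_trans ?_ (add_le_add_left (not_ok_le n N hnN δ hδ hδ1) q)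
  rw [nu, Measure.map_apply (measurable_asm n) hB]
  have hm := measurable_asm n hB
  rw [Measure.prod_apply hm, Measure.prod_apply hOK]
  calc _ = ∫⁻ g, (∫⁻ b, nu n {G | asm g b G ∈ Bad} ∂(gpi n)) ∂(gaussianReal 0 2) := by
        refine lintegral_congr fun g => ?_
        rw [Measure.prod_apply (measurable_prodMk_left hm)]
        rfl
    _ ≤ ∫⁻ g, (∫⁻ b, ({b | ¬ OK N n δ g b}.indicator 1 b + q) ∂(gpi n)) ∂(gaussianReal 0 2) := by
        refine lintegral_mono fun g => lintegral_mono fun b => ?_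
        by_cases hb : OK N n δ g b
        · exact (h g b hb).trans le_add_self
        · refine le_trans prob_le_one ?_
          rw [Set.indicator_of_mem (by exact hb)]
          simp
    _ = _ := by
        have : ∀ g, (∫⁻ b, ({b | ¬ OK N n δ g b}.indicator 1 b + q) ∂(gpi n)) = gpi n {b | ¬ OK N n δ g b} + q := by
          intro g
          have hmg : MeasurableSet {b | ¬ OK N n δ g b} := measurable_prodMk_left hOK
          rw [lintegral_add_right _ measurable_const, lintegral_indicator_one hmg]
          simp
        simp_rw [this]
        rw [lintegral_add_right _ measurable_const]
        simp

lemma meas_good (n m : ℕ) (t : ℝ) (B : Mat n) : MeasurableSet {G : Mat n | Good m t (G + B)} := by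
  have : IsOpen ((fun G : Mat n => G + B) ⁻¹' {B : Mat n | Good m t B}) :=
    (isOpen_good n m t).preimage (by fun_prop)
  exact this.measurableSet

lemma rot {n m : ℕ} {t s : ℝ} (u : Fin (n+1) → ℝ) (hu : nsq u = 1) :
    ∃ O : Mat (n+1), IsOrth O ∧ ∀ G, (Good m t (conjM O G + s • rk1 e0) ↔ Good m t (G + s • rk1 u)) := by
  obtain ⟨O, hO, h⟩ := exists_orth_e0 u hu
  refine ⟨O, hO, fun G => ?_⟩
  rw [← good_conj_iff hO (B := G + s • rk1 u), conj_add, conj_smul, conj_rk1, h]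

lemma rot1 {n m : ℕ} {t s : ℝ} (u : Fin (n+1) → ℝ) (hu : nsq u = 1) :
    nu (n+1) {G | Good m t (G + s • rk1 u)} = nu (n+1) {G | Good m t (G + s • rk1 e0)} := by
  obtain ⟨O, hO, h⟩ := rot (m := m) (t := t) (s := s) u hu
  conv_rhs => rw [← nu_conj hO, Measure.map_apply (continuous_conj O).measurable (meas_good _ _ _ _)]
  congr 1; ext G; exact (h G).symm

lemma rot2 {n m : ℕ} {t s : ℝ} (u : Fin (n+1) → ℝ) (hu : nsq u = 1) :
    nu (n+1) {G | ¬ Good m t (G + s • rk1 u)} = nu (n+1) {G | ¬ Good m t (G + s • rk1 e0)} := by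
  obtain ⟨O, hO, h⟩ := rot (m := m) (t := t) (s := s) u hu
  conv_rhs => rw [← nu_conj hO, Measure.map_apply (continuous_conj O).measurable (by exact (meas_good _ _ _ _).compl)]
  congr 1; ext G; exact not_congr (h G).symm

lemma exists_unit {n : ℕ} (v : Fin (n+1) → ℝ) :
    ∃ u : Fin (n+1) → ℝ, nsq u = 1 ∧ ∀ x, (dot v x)^2 = nsq v * (dot u x)^2 := by
  by_cases hv : nsq v = 0
  · refine ⟨e0, by rw [e0, nsq_cons]; simp [nsq], fun x => ?_⟩
    have : ∀ i, v i = 0 := by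
      intro i
      have := (Finset.sum_eq_zero_iff_of_nonneg (fun i _ => sq_nonneg (v i))).1 hv i (Finset.mem_univ _)
      simpa using this
    simp [hv, dot, this]
  · have hp : 0 < nsq v := lt_of_le_of_ne (nsq_nonneg v) (Ne.symm hv)
    have hs : √(nsq v) ^ 2 = nsq v := Real.sq_sqrt hp.le
    have hs0 : √(nsq v) ≠ 0 := by positivity
    refine ⟨fun i => v i / √(nsq v), ?_, fun x => ?_⟩
    · have : nsq (fun i => v i / √(nsq v)) = nsq v / √(nsq v)^2 := by
        simp only [nsq, div_pow, ← Finset.sum_div]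
      rw [this, hs, div_self hv]
    · have : dot (fun i => v i / √(nsq v)) x = dot v x / √(nsq v) := by
        simp only [dot, Finset.sum_div]
        exact Finset.sum_congr rfl fun i _ => by ring
      rw [this, div_pow, hs]; field_simp

lemma upper_ind (N : ℕ) (hN : 1 ≤ N) (δ ε : ℝ) (hδ : 0 < δ) (hδ1 : δ ≤ 1) (hε : 2 * δ ≤ ε) (n : ℕ) :
    n ≤ N → ∀ v : Fin n → ℝ, nsq v ≤ √N →
      nu n {G | Good 1 ((2+ε)*√N) (G + rk1 v)} ≤ n * pN N δ := by
  have hR : 0 < √(N:ℝ) := Real.sqrt_pos.2 (by exact_mod_cast hN)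
  have hRR : √(N:ℝ) * √N = N := Real.mul_self_sqrt (Nat.cast_nonneg _)
  induction n with
  | zero =>
    intro _ v _
    have : {G : Mat 0 | Good 1 ((2+ε)*√N) (G + rk1 v)} = ∅ := by
      ext G; simp [good_one, nsq, qf]
    rw [this]; simp
  | succ n ih =>
    intro hn v hv
    obtain ⟨u, hu, huv⟩ := exists_unit v
    have h1 : nu (n+1) {G | Good 1 ((2+ε)*√N) (G + rk1 v)} ≤ nu (n+1) {G | Good 1 ((2+ε)*√N) (G + √(N:ℝ) • rk1 u)} := by
      refine measure_mono fun G hG => good_mono (fun x => ?_) hG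
      rw [qf_add, qf_add, qf_smul, qf_rk1, qf_rk1, huv]
      have := mul_le_mul_of_nonneg_right hv (sq_nonneg (dot u x))
      linarith
    refine h1.trans ?_
    rw [rot1 u hu]
    have h2 := nu_step n N (by omega) δ hδ hδ1 {G | Good 1 ((2+ε)*√N) (G + √(N:ℝ) • rk1 e0)}
      (meas_good _ _ _ _) (n * pN N δ) ?_
    · refine h2.trans (le_of_eq ?_); push_cast; ring
    · intro g b hok
      have hg := abs_lt.1 hok.1
      have hb := abs_lt.1 hok.2
      have hd : (1 + δ) * √N ≤ (2+ε)*√N - g - √N := by nlinarith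
      have hd0 : 0 < (2+ε)*√N - g - √N := lt_of_lt_of_le (by positivity) hd
      set d := (2+ε)*√N - g - √N with hdd
      have hnN : (n : ℝ) ≤ N := by exact_mod_cast (by omega : n ≤ N)
      refine le_trans (measure_mono fun G hG => ?_) (ih (by omega) (fun i => b i / √d) ?_)
      · refine good_mono (fun x => ?_) (good_one_step g _ _ b G hd0 hG)
        rw [qf_add, qf_add, qf_smul, qf_rk1, qf_rk1]
        have : dot (fun i => b i / √d) x = dot b x / √d := by
          simp only [dot, Finset.sum_div]
          exact Finset.sum_congr rfl fun i _ => by ring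
        rw [this, div_pow, Real.sq_sqrt hd0.le]
        apply le_of_eq; rw [← hdd]; ring
      · have : nsq (fun i => b i / √d) = nsq b / √d^2 := by
          simp only [nsq, div_pow, ← Finset.sum_div]
        rw [this, Real.sq_sqrt hd0.le, div_le_iff₀ hd0]
        nlinarith [mul_le_mul_of_nonneg_left hd hR.le]

lemma upper_nu (ε : ℝ) (hε : 0 < ε) :
    Tendsto (fun N : ℕ => nu N {G | Good 1 ((2+ε)*√N) G}) atTop (nhds 0) := by
  have hδ : 0 < min (ε/2) 1 := by positivity
  refine tendsto_of_tendsto_of_tendsto_of_le_of_le' tendsto_const_nhds (pN_tendsto (min (ε/2) 1) hδ)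
    (Eventually.of_forall fun _ => zero_le) ?_
  filter_upwards [eventually_ge_atTop 1] with N hN
  have := upper_ind N hN (min (ε/2) 1) ε hδ (min_le_right _ _)
    (by linarith [min_le_left (ε/2) 1]) N le_rfl 0 (by simp [nsq])
  have e : rk1 (0 : Fin N → ℝ) = 0 := by ext i j; simp [rk1]
  simpa [e] using this

lemma lower_ind (N : ℕ) (hN : 1 ≤ N) (δ a : ℝ) (hδ : 0 < δ) (hδ1 : δ ≤ 1/2) (k : ℕ) (s : ℕ → ℝ)
    (H1 : ∀ j < k, s j < a - δ ∧ s (j+1) * (a + δ - s j) ≤ 1 - 2*δ)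
    (H2 : a + δ < s k) (H3 : s 0 ≤ 0) (H4 : 1 + δ ≤ - s 0 * (s k - a - δ))
    (n0 : ℕ) (hn0 : (1-δ)*N ≤ n0 + 1) (r : ℕ) :
    n0 + 1 + r ≤ N → ∀ u : Fin (n0 + r + 1) → ℝ, nsq u = 1 → ∀ j ≤ k, ∀ m, m * (k+1) ≤ r + j →
      nu (n0 + r + 1) {G | ¬ Good m (a*√N) (G + (s j * √N) • rk1 u)} ≤ r * pN N δ := by
  have hR : 0 < √(N:ℝ) := Real.sqrt_pos.2 (by exact_mod_cast hN)
  have hRR : √(N:ℝ) * √N = N := Real.mul_self_sqrt (Nat.cast_nonneg _)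
  induction r with
  | zero =>
    intro _ u _ j hj m hm
    have : m = 0 := by
      by_contra hc
      have : 1 * (k+1) ≤ m * (k+1) := Nat.mul_le_mul_right _ (by omega)
      omega
    subst this
    simp [good_zero]
  | succ r ih =>
    intro hn u hu j hj m hm
    rw [rot2 (n := n0 + (r+1)) u hu]
    have h2 := nu_step (n0 + r + 1) N (by omega) δ hδ (by linarith)
      {G | ¬ Good m (a*√N) (G + (s j * √N) • rk1 e0)}
      (meas_good _ _ _ _).compl (r * pN N δ) ?_
    · refine h2.trans (le_of_eq ?_); push_cast; ring
    · intro g b hok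
      have hg := abs_lt.1 hok.1
      have hb := abs_lt.1 hok.2
      obtain ⟨w, hw, hwb⟩ := exists_unit b
      have hnN : ((n0 + r + 1 : ℕ) : ℝ) ≤ N := by exact_mod_cast (by omega)
      have hnN2 : (1-δ)*N ≤ ((n0 + r + 1 : ℕ) : ℝ) := by
        push_cast; linarith [(Nat.cast_nonneg r : (0:ℝ) ≤ r)]
      have hN0 : (0:ℝ) ≤ N := Nat.cast_nonneg _
      have hb1 : (1-2*δ)*N ≤ nsq b := by nlinarith
      have hb2 : nsq b ≤ (1+δ)*N := by nlinarith
      have key : ∀ s' : ℝ, s' * √N ≤ nsq b / (a*√N - g - s j*√N) → ∀ m' (G : Mat (n0+r+1)),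
          Good m' (a*√N) (G + (s' * √N) • rk1 w) →
          Good m' (a*√N) (G + (1/(a*√N - g - s j*√N)) • rk1 b) := by
        intro s' hs' m' G hG
        refine good_mono (fun x => ?_) hG
        rw [qf_add, qf_add, qf_smul, qf_smul, qf_rk1, qf_rk1, hwb]
        have := mul_le_mul_of_nonneg_right hs' (sq_nonneg (dot w x))
        have e : nsq b / (a*√N - g - s j*√N) * (dot w x)^2 = 1 / (a*√N - g - s j*√N) * (nsq b * (dot w x)^2) := by ring
        linarith
      rcases Nat.lt_or_ge j k with hjk | hjk
      · obtain ⟨hs1, hs2⟩ := H1 j hjk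
        have hd : 0 < a*√N - g - s j*√N := by nlinarith
        refine le_trans (measure_mono fun G hG => ?_) (ih (by omega) w hw (j+1) (by omega) m (by omega))
        refine fun hG2 => hG ?_
        refine good_step g _ _ b G hd.ne' (key (s (j+1)) ?_ m G hG2)
        rw [le_div_iff₀ hd]
        rcases le_total (s (j+1)) 0 with h0 | h0
        · have : s (j+1) * √N * (a*√N - g - s j*√N) ≤ 0 :=
            mul_nonpos_of_nonpos_of_nonneg (mul_nonpos_of_nonpos_of_nonneg h0 hR.le) hd.le
          nlinarith [nsq_nonneg b]
        · have hd2 : a*√N - g - s j*√N ≤ (a + δ - s j) * √N := by nlinarith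
          have := mul_le_mul_of_nonneg_left hd2 (mul_nonneg h0 hR.le)
          have e : s (j+1) * √N * ((a + δ - s j) * √N) = s (j+1) * (a + δ - s j) * N := by
            linear_combination (s (j+1) * (a + δ - s j)) * hRR
          nlinarith
      · have hjk' : j = k := le_antisymm hj hjk
        subst hjk'
        rcases m with _ | m
        · refine le_trans (le_of_eq ?_) (zero_le)
          simp [good_zero]
        · have hd : a*√N - g - s j*√N < 0 := by nlinarith
          refine le_trans (measure_mono fun G hG => ?_) (ih (by omega) w hw 0 (by omega) m (by
            have : (m+1) * (j+1) = m * (j+1) + (j+1) := by ring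
            omega))
          refine fun hG2 => hG ?_
          refine good_step_succ g _ _ b G hd (key (s 0) ?_ m G hG2)
          rw [le_div_iff_of_neg hd]
          have hd2 : (s j - a - δ) * √N ≤ -(a*√N - g - s j*√N) := by nlinarith
          have := mul_le_mul_of_nonneg_left hd2 (mul_nonneg (neg_nonneg.2 H3) hR.le)
          have e : -s 0 * √N * ((s j - a - δ) * √N) = -s 0 * (s j - a - δ) * N := by
            linear_combination (-s 0 * (s j - a - δ)) * hRR
          nlinarith


lemma lower_fin (N : ℕ) (hN : 1 ≤ N) (δ a : ℝ) (hδ : 0 < δ) (hδ1 : δ ≤ 1/2) (k : ℕ) (s : ℕ → ℝ)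
    (H1 : ∀ j < k, s j < a - δ ∧ s (j+1) * (a + δ - s j) ≤ 1 - 2*δ)
    (H2 : a + δ < s k) (H3 : s 0 ≤ 0) (H4 : 1 + δ ≤ - s 0 * (s k - a - δ))
    (r m : ℕ) (hr : (r:ℝ) ≤ δ * N) (hm : m * (k+1) ≤ r) :
    nu N {G | ¬ Good m (a*√N) G} ≤ N * pN N δ := by
  have hN' : (1:ℝ) ≤ N := by exact_mod_cast hN
  have hrN : r < N := by
    have : (r:ℝ) < N := by nlinarith
    exact_mod_cast this
  obtain ⟨n0, hn0⟩ : ∃ n0, N = n0 + r + 1 := ⟨N - r - 1, by omega⟩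
  have hc : (1-δ)*N ≤ n0 + 1 := by
    have : (N:ℝ) = n0 + r + 1 := by exact_mod_cast hn0
    linarith
  have h := lower_ind N hN δ a hδ hδ1 k s H1 H2 H3 H4 n0 hc r (by omega) e0
    (by rw [e0, nsq_cons]; simp [nsq]) 0 (by omega) m (by omega)
  have hle : (r : ℝ≥0∞) * pN N δ ≤ N * pN N δ := by gcongr
  refine le_trans ?_ hle
  have hR : 0 ≤ √(N:ℝ) := Real.sqrt_nonneg _
  generalize (√(N:ℝ)) = R at *
  generalize (r : ℝ≥0∞) * pN N δ = q at *
  clear hle hc hrN hr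
  subst hn0
  refine le_trans (measure_mono fun G hG => ?_) h
  refine fun hG2 => hG (good_mono (fun x => ?_) hG2)
  rw [qf_add, qf_smul, qf_rk1]
  have : s 0 * R * (dot e0 x)^2 ≤ 0 :=
    mul_nonpos_of_nonpos_of_nonneg (mul_nonpos_of_nonpos_of_nonneg H3 hR) (sq_nonneg _)
  linarith

lemma lower_nu (ε : ℝ) (hε : 0 < ε) (hε1 : ε ≤ 1) :
    ∃ c : ℝ, 0 < c ∧ Tendsto (fun N : ℕ => nu N {G | ¬ ∃ m : ℕ, c * N ≤ m ∧ Good m ((2-ε)*√N) G})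
      atTop (nhds 0) := by
  set a : ℝ := 2 - ε with ha
  set δ : ℝ := ε / 100 with hδ
  set κ : ℝ := ε / 8 with hκ
  have hκ0 : 0 < κ := by positivity
  set K : ℕ := ⌊(a - 1/8 + 2) / κ⌋₊ with hK
  have hK1 : K * κ ≤ a - 1/8 + 2 := by
    rw [← le_div_iff₀ hκ0]; exact Nat.floor_le (div_nonneg (by linarith) hκ0.le)
  have hK2 : a - 1/8 + 2 < (K + 1) * κ := by
    rw [← div_lt_iff₀ hκ0]; exact Nat.lt_floor_add_one _
  let s : ℕ → ℝ := fun j => if j ≤ K then -2 + j * κ else a + δ + 1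
  have hs : ∀ j ≤ K, s j = -2 + j * κ := fun j hj => by simp [s, hj]
  have hsk : s (K+1) = a + δ + 1 := by simp [s]
  have hs0 : s 0 = -2 := by simp [s]
  have hδ0 : 0 < δ := by positivity
  have H1 : ∀ j < K + 1, s j < a - δ ∧ s (j+1) * (a + δ - s j) ≤ 1 - 2*δ := by
    intro j hj
    have hjK : (j:ℝ) ≤ K := by exact_mod_cast (by omega : j ≤ K)
    have hj0 : (0:ℝ) ≤ j := Nat.cast_nonneg _
    have hjκ : (j:ℝ) * κ ≤ K * κ := by gcongr
    refine ⟨by rw [hs j (by omega)]; linarith, ?_⟩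
    rcases Nat.lt_or_ge j K with h | h
    · rw [hs j (by omega), hs (j+1) (by omega)]
      have e : (-2 + ((j+1 : ℕ):ℝ) * κ) = -2 + (j:ℝ)*κ + κ := by push_cast; ring
      rw [e]
      have hjκ0 : 0 ≤ (j:ℝ) * κ := by positivity
      generalize (j:ℝ) * κ = y at *
      have h1 : (-2 + y) * (a + δ - (-2 + y)) ≤ (a+δ)^2/4 := by nlinarith [sq_nonneg ((a+δ)/2 - (-2+y))]
      have h2 : κ * (a + δ - (-2 + y)) ≤ κ * (4 + δ) := by
        apply mul_le_mul_of_nonneg_left _ hκ0.le; linarith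
      have h3 : (a+δ)^2/4 + κ * (4 + δ) ≤ 1 - 2*δ := by
        rw [ha, hδ, hκ]; nlinarith
      nlinarith
    · have : j = K := by omega
      subst this
      rw [hsk, hs K le_rfl]
      have h1 : a + δ - (-2 + K * κ) ≤ 1/4 + δ := by linarith
      nlinarith
  have hc : 0 < δ / (2 * (K + 2)) := by positivity
  refine ⟨δ / (2 * (K+2)), hc, ?_⟩
  refine tendsto_of_tendsto_of_tendsto_of_le_of_le' tendsto_const_nhds (pN_tendsto δ hδ0)
    (Eventually.of_forall fun _ => zero_le) ?_
  have hev : ∀ᶠ N : ℕ in atTop, (2 * (K+3)) / δ ≤ (N:ℝ) :=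
    tendsto_natCast_atTop_atTop.eventually_ge_atTop _
  filter_upwards [eventually_ge_atTop 1, hev] with N hN hN2
  have hfl : ((⌊δ * N⌋₊ : ℕ) : ℝ) ≤ δ * N := Nat.floor_le (by positivity)
  have hfl2 : δ * N < (⌊δ * N⌋₊ : ℕ) + 1 := Nat.lt_floor_add_one _
  set r := ⌊δ * N⌋₊ with hr
  have hm : r / (K+2) * (K+2) ≤ r := Nat.div_mul_le_self _ _
  have hm2 : r < (r / (K+2) + 1) * (K+2) := by
    rw [mul_comm]; exact Nat.lt_mul_div_succ r (by omega)
  have hm2' : (r:ℝ) < ((r / (K+2) : ℕ) + 1) * (K+2) := by exact_mod_cast hm2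
  refine le_trans (measure_mono fun G hG => ?_)
    (lower_fin N hN δ a hδ0 (by linarith) (K+1) s H1 (by linarith) (by linarith)
      (by rw [hs0, hsk]; linarith) r (r/(K+2)) hfl hm)
  refine fun hG2 => hG ⟨r/(K+2), ?_, hG2⟩
  rw [div_mul_eq_mul_div, div_le_iff₀ (by positivity)]
  rw [div_le_iff₀ hδ0] at hN2
  nlinarith


abbrev MM (n : ℕ) := Matrix (Fin n) (Fin n) ℝ

lemma spec {n : ℕ} {B : MM n} (hB : B.IsHermitian) :
    ∃ (U : MM n) (d : Fin n → ℝ), U * U.conjTranspose = 1 ∧ U.conjTranspose * U = 1 ∧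
      B = U * Matrix.diagonal d * U.conjTranspose := by
  refine ⟨hB.eigenvectorUnitary, hB.eigenvalues, ?_, ?_, ?_⟩
  · exact Unitary.coe_mul_star_self hB.eigenvectorUnitary
  · exact Unitary.coe_star_mul_self hB.eigenvectorUnitary
  · have := hB.spectral_theorem
    rw [Unitary.conjStarAlgAut_apply] at this
    exact this

def IsPP {n : ℕ} (B M : MM n) : Prop := M.PosSemidef ∧ (M - B).PosSemidef ∧ M * (M - B) = 0

lemma exists_pp {n : ℕ} {B : MM n} (hB : B.IsHermitian) : ∃ M, IsPP B M := by
  obtain ⟨U, d, h1, h2, h3⟩ := spec hB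
  have key : U * Matrix.diagonal (fun i => max (d i) 0) * U.conjTranspose - B
      = U * Matrix.diagonal (fun i => max (d i) 0 - d i) * U.conjTranspose := by
    rw [h3, ← Matrix.sub_mul, ← Matrix.mul_sub, Matrix.diagonal_sub]
  refine ⟨U * Matrix.diagonal (fun i => max (d i) 0) * U.conjTranspose, ?_, ?_, ?_⟩
  · exact (Matrix.PosSemidef.diagonal (fun i => le_max_right _ _)).mul_mul_conjTranspose_same U
  · rw [key]
    exact (Matrix.PosSemidef.diagonal (fun i => sub_nonneg.2 (le_max_left _ _))).mul_mul_conjTranspose_same U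
  · rw [key]
    have : U * Matrix.diagonal (fun i => max (d i) 0) * U.conjTranspose *
       (U * Matrix.diagonal (fun i => max (d i) 0 - d i) * U.conjTranspose) =
       U * Matrix.diagonal (fun i => max (d i) 0) * (U.conjTranspose * U) * Matrix.diagonal (fun i => max (d i) 0 - d i) * U.conjTranspose := by
      simp only [Matrix.mul_assoc]
    rw [this, h2, Matrix.mul_one, Matrix.mul_assoc U, Matrix.diagonal_mul_diagonal]
    have : (fun i => max (d i) 0 * (max (d i) 0 - d i)) = 0 := by
      ext i
      rcases le_total (d i) 0 with h | h <;> simp [h]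
    rw [this]; simp

lemma factor {n : ℕ} {P : MM n} (hP : P.PosSemidef) : ∃ C : MM n, P = C.transpose * C := by
  obtain ⟨U, d, h1, h2, h3⟩ := spec hP.1
  have hd : ∀ i, 0 ≤ d i := by
    have h4 : (Matrix.diagonal d).PosSemidef := by
      have := hP.conjTranspose_mul_mul_same U
      rw [h3] at this
      have e : U.conjTranspose * (U * Matrix.diagonal d * U.conjTranspose) * U =
        (U.conjTranspose * U) * Matrix.diagonal d * (U.conjTranspose * U) := by
        simp only [Matrix.mul_assoc]
      rwa [e, h2, Matrix.one_mul, Matrix.mul_one] at this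
    exact Matrix.posSemidef_diagonal_iff.1 h4
  refine ⟨Matrix.diagonal (fun i => √(d i)) * U.conjTranspose, ?_⟩
  rw [Matrix.transpose_mul, Matrix.diagonal_transpose]
  have e : U.conjTranspose.transpose = U := by simp
  rw [e, Matrix.mul_assoc, ← Matrix.mul_assoc (Matrix.diagonal _), Matrix.diagonal_mul_diagonal,
    ← Matrix.mul_assoc, h3]
  simp [fun i => Real.mul_self_sqrt (hd i)]

lemma psd_symm {n : ℕ} {P : MM n} (hP : P.PosSemidef) : P.transpose = P := by
  have := hP.1.eq; simpa using this

lemma trace_mul_nonneg {n : ℕ} {P Q : MM n} (hP : P.PosSemidef) (hQ : Q.PosSemidef) :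
    0 ≤ (P * Q).trace := by
  obtain ⟨C, rfl⟩ := factor hP
  rw [Matrix.mul_assoc, Matrix.trace_mul_comm]
  exact (hQ.mul_mul_conjTranspose_same C).trace_nonneg

def fro {n : ℕ} (X : MM n) : ℝ := ∑ i, ∑ j, X i j ^ 2

lemma fro_nonneg {n : ℕ} (X : MM n) : 0 ≤ fro X :=
  Finset.sum_nonneg fun _ _ => Finset.sum_nonneg fun _ _ => sq_nonneg _

lemma fro_eq {n : ℕ} (X : MM n) (h : X.transpose = X) : fro X = (X * X).trace := by
  simp only [fro, Matrix.trace, Matrix.diag, Matrix.mul_apply]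
  refine Finset.sum_congr rfl fun i _ => Finset.sum_congr rfl fun j _ => ?_
  have : X j i = X i j := congrFun (congrFun h i) j
  rw [this, sq]

lemma pp_lip {n : ℕ} {B1 B2 M1 M2 : MM n} (h1 : IsPP B1 M1) (h2 : IsPP B2 M2) :
    fro (M1 - M2) ≤ fro (B1 - B2) := by
  obtain ⟨a1, b1, c1⟩ := h1
  obtain ⟨a2, b2, c2⟩ := h2
  set N1 := M1 - B1 with hN1
  set N2 := M2 - B2 with hN2
  have e : B1 - B2 = (M1 - M2) - (N1 - N2) := by rw [hN1, hN2]; abel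
  clear_value N1 N2
  have s1 : (M1 - M2).transpose = M1 - M2 := by
    rw [Matrix.transpose_sub, psd_symm a1, psd_symm a2]
  have s2 : (N1 - N2).transpose = N1 - N2 := by
    rw [Matrix.transpose_sub, psd_symm b1, psd_symm b2]
  have p1 := trace_mul_nonneg a1 b2
  have p2 := trace_mul_nonneg a2 b1
  have hxy : ((M1 - M2) * (N1 - N2)).trace ≤ 0 := by
    rw [Matrix.sub_mul, Matrix.mul_sub, Matrix.mul_sub, c1, c2]
    simp only [Matrix.trace_sub, Matrix.trace_zero]
    linarith
  rw [e, fro_eq _ s1, fro_eq _ (by rw [Matrix.transpose_sub, s1, s2])]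
  have := fro_nonneg (N1 - N2)
  rw [fro_eq _ s2] at this
  generalize M1 - M2 = X at *
  generalize N1 - N2 = Y at *
  rw [Matrix.sub_mul, Matrix.mul_sub, Matrix.mul_sub]
  simp only [Matrix.trace_sub]
  rw [Matrix.trace_mul_comm Y X]
  linarith

lemma fro_zero_iff {n : ℕ} {X : MM n} (h : fro X ≤ 0) : X = 0 := by
  have h0 : fro X = 0 := le_antisymm h (fro_nonneg X)
  ext i j
  have h1 := (Finset.sum_eq_zero_iff_of_nonneg (fun i _ => Finset.sum_nonneg fun j _ => sq_nonneg (X i j))).1 h0 i (Finset.mem_univ _)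
  have h2 := (Finset.sum_eq_zero_iff_of_nonneg (fun j _ => sq_nonneg (X i j))).1 h1 j (Finset.mem_univ _)
  simpa using h2

lemma pp_unique {n : ℕ} {B M1 M2 : MM n} (h1 : IsPP B M1) (h2 : IsPP B M2) : M1 = M2 := by
  have := pp_lip h1 h2
  rw [sub_self] at this
  exact sub_eq_zero.1 (fro_zero_iff (this.trans (by simp [fro])))

lemma pp_conj {n : ℕ} {B M : MM n} (h : IsPP B M) (O : MM n) (hO : O.transpose * O = 1) :
    IsPP (O * B * O.transpose) (O * M * O.transpose) := by
  obtain ⟨a, b, c⟩ := h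
  have e : O * M * O.transpose - O * B * O.transpose = O * (M - B) * O.transpose := by
    rw [← Matrix.sub_mul, ← Matrix.mul_sub]
  refine ⟨a.mul_mul_conjTranspose_same O, ?_, ?_⟩
  · rw [e]; exact b.mul_mul_conjTranspose_same O
  · rw [e]
    have : O * M * O.transpose * (O * (M - B) * O.transpose) =
      O * M * (O.transpose * O) * (M - B) * O.transpose := by simp only [Matrix.mul_assoc]
    rw [this, hO, Matrix.mul_one, Matrix.mul_assoc O, c]; simp

/-- properties of the positive part -/
lemma pp_trace {n : ℕ} {A M : MM n} {a : ℝ} (h : IsPP (A - a • 1) M) :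
    (A * M).trace = a * M.trace + fro M := by
  obtain ⟨h1, h2, h3⟩ := h
  have h4 : ((M - (A - a • (1 : MM n))) * M).trace = 0 := by rw [Matrix.trace_mul_comm, h3]; simp
  rw [fro_eq _ (psd_symm h1)]
  rw [Matrix.sub_mul, Matrix.sub_mul, Matrix.trace_sub, Matrix.trace_sub] at h4
  simp only [Matrix.smul_mul, Matrix.one_mul, Matrix.trace_smul, smul_eq_mul] at h4
  linarith

lemma psd_dot {n : ℕ} {P : MM n} (h : P.PosSemidef) (x : Fin n → ℝ) : 0 ≤ qf P x := by
  have := h.dotProduct_mulVec_nonneg x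
  exact this.trans_eq (qfP P x).symm

lemma qf_sub' {n : ℕ} (A B : MM n) (x) : qf (A - B : MM n) x = qf A x - qf B x := by
  simp [qf, mul_sub, sub_mul]

lemma qf_one {n : ℕ} (a : ℝ) (x : Fin n → ℝ) : qf (a • (1 : MM n) : MM n) x = a * nsq x := by
  simp only [qf, nsq, Matrix.smul_apply, Matrix.one_apply, smul_eq_mul, Finset.mul_sum]
  refine Finset.sum_congr rfl fun i _ => ?_
  rw [Finset.sum_eq_single i] <;> simp +contextual [eq_comm]
  ring

lemma pp_qf {n : ℕ} {A M : MM n} {a : ℝ} (h : IsPP (A - a • 1) M) (x : Fin n → ℝ) :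
    qf A x - a * nsq x ≤ qf M x := by
  have := psd_dot h.2.1 x
  rw [qf_sub', qf_sub', qf_one] at this
  linarith

/-- if A ≤ c then fro M ≤ (c-a)^2 n -/
lemma pp_fro {n : ℕ} {A M : MM n} {a c : ℝ} (hA : A.transpose = A) (h : IsPP (A - a • 1) M) (hc : a ≤ c)
    (hq : ∀ x, qf A x ≤ c * nsq x) : fro M ≤ (c - a)^2 * n := by
  have hpsd : (c • (1 : MM n) - A).PosSemidef := by
    refine .of_dotProduct_mulVec_nonneg ?_ fun x => ?_
    · ext i j
      have : A j i = A i j := congrFun (congrFun hA i) j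
      simp [this, Matrix.one_apply, eq_comm]
    · have h1 : qf (c • (1 : MM n) - A : MM n) x = star x ⬝ᵥ ((c • (1 : MM n) - A).mulVec x) := qfP _ x
      rw [← h1, qf_sub', qf_one]
      linarith [hq x]
  have h1 := trace_mul_nonneg hpsd h.1
  rw [Matrix.sub_mul, Matrix.trace_sub, pp_trace h] at h1
  simp only [Matrix.smul_mul, Matrix.one_mul, Matrix.trace_smul, smul_eq_mul] at h1
  have h2 : fro M ≤ (c - a) * M.trace := by linarith
  have h3 : M.trace ^ 2 ≤ n * fro M := by
    have := sq_sum_le_card_mul_sum_sq (s := (Finset.univ : Finset (Fin n))) (f := fun i => M i i)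
    rw [Finset.card_univ, Fintype.card_fin] at this
    refine this.trans (mul_le_mul_of_nonneg_left ?_ (Nat.cast_nonneg _))
    refine Finset.sum_le_sum fun i _ => ?_
    exact Finset.single_le_sum (f := fun j => M i j ^ 2) (fun j _ => sq_nonneg _) (Finset.mem_univ i)
  have h4 := fro_nonneg M
  rcases h4.eq_or_lt with h5 | h5
  · rw [← h5]; have := sub_nonneg.2 hc; positivity
  · have h6 : fro M ^ 2 ≤ (c-a)^2 * (n * fro M) := by
      calc fro M ^ 2 ≤ ((c - a) * M.trace)^2 := pow_le_pow_left₀ h4 h2 2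
        _ = (c-a)^2 * M.trace^2 := by ring
        _ ≤ _ := mul_le_mul_of_nonneg_left h3 (sq_nonneg _)
    nlinarith

lemma good_trace {n m : ℕ} {A M : MM n} {a ε : ℝ} (h : IsPP (A - a • 1) M)
    (hg : Good m (a + ε) A) : ε * m ≤ M.trace := by
  obtain ⟨L, hL⟩ := hg
  obtain ⟨C, hC⟩ := factor h.1
  have hinj : Function.Injective L := by
    rw [← LinearMap.ker_eq_bot, LinearMap.ker_eq_bot']
    intro y hy
    by_contra hne
    have := hL y hne
    rw [hy] at this
    simp [nsq, qf] at this
  let e : (Fin n → ℝ) ≃ₗ[ℝ] EuclideanSpace ℝ (Fin n) := (WithLp.linearEquiv 2 ℝ (Fin n → ℝ)).symm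
  let S : Submodule ℝ (EuclideanSpace ℝ (Fin n)) := LinearMap.range (e.toLinearMap.comp L)
  have hdim : Module.finrank ℝ S = m := by
    have hi : Function.Injective (e.toLinearMap.comp L) := fun x y hxy => hinj (e.injective hxy)
    rw [LinearMap.finrank_range_of_inj hi]; simp
  let b := (stdOrthonormalBasis ℝ S).reindex (finCongr hdim)
  let v : Fin m → EuclideanSpace ℝ (Fin n) := fun i => (b i : EuclideanSpace ℝ (Fin n))
  have hv : Orthonormal ℝ v := b.orthonormal.comp_linearIsometry S.subtypeₗᵢ
  let q : Fin m → (Fin n → ℝ) := fun j => WithLp.ofLp (v j)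
  have hq1 : ∀ j, nsq (q j) = 1 := by
    intro j
    have h1 := hv.1 j
    have h2 : ‖v j‖^2 = nsq (q j) := by
      rw [EuclideanSpace.norm_sq_eq]; simp [nsq, q]
    rw [← h2, h1]; norm_num
  have hq2 : ∀ j, a + ε ≤ qf A (q j) := by
    intro j
    obtain ⟨y, hy⟩ := (b j).2
    have hy' : L y = q j := by
      have : e (L y) = v j := hy
      simp only [q, ← this]; rfl
    have hne : y ≠ 0 := by
      rintro rfl
      rw [map_zero] at hy'
      have := hq1 j
      rw [← hy'] at this
      simp [nsq] at this
    have := hL y hne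
    rw [hy', hq1] at this
    linarith
  have hM : ∀ j, qf M (q j) = ∑ i, (dot (C i) (q j))^2 := by
    intro j
    have : qf M (q j) = dotProduct (q j) (M.mulVec (q j)) := qfP _ _
    rw [this, hC, ← Matrix.mulVec_mulVec, Matrix.dotProduct_mulVec, Matrix.vecMul_transpose]
    simp only [dotProduct, sq]
    first | done | rfl
  have htr : M.trace = ∑ i, nsq (C i) := by
    rw [hC, Matrix.trace_mul_comm]
    simp only [Matrix.trace, Matrix.diag, Matrix.mul_apply, nsq, Matrix.transpose_apply, sq]
  have hb : ∀ i, ∑ j, (dot (C i) (q j))^2 ≤ nsq (C i) := by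
    intro i
    have h1 := hv.sum_inner_products_le (WithLp.toLp 2 (C i)) (s := Finset.univ)
    have h2 : ‖(WithLp.toLp 2 (C i) : EuclideanSpace ℝ (Fin n))‖^2 = nsq (C i) := by
      rw [EuclideanSpace.norm_sq_eq]; simp [nsq]
    rw [h2] at h1
    refine le_trans (le_of_eq ?_) h1
    refine Finset.sum_congr rfl fun j _ => ?_
    rw [Real.norm_eq_abs, sq_abs]
    congr 1
  calc ε * m = ∑ j : Fin m, ε := by simp [mul_comm]
    _ ≤ ∑ j, qf M (q j) := by
      refine Finset.sum_le_sum fun j _ => ?_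
      have := pp_qf h (q j)
      rw [hq1] at this
      linarith [hq2 j]
    _ = ∑ i, ∑ j, (dot (C i) (q j))^2 := by
      simp_rw [hM]; exact Finset.sum_comm
    _ ≤ _ := by rw [htr]; exact Finset.sum_le_sum fun i _ => hb i


def syA {n : ℕ} (R : ℝ) (G : Mat n) : MM n := (1/(2*R)) • (Matrix.of G + (Matrix.of G).transpose)
def sy {n : ℕ} (R a : ℝ) (G : Mat n) : MM n := syA R G - a • 1

lemma syA_symm {n : ℕ} (R : ℝ) (G : Mat n) : (syA R G).transpose = syA R G := by
  rw [syA, Matrix.transpose_smul, Matrix.transpose_add, Matrix.transpose_transpose, add_comm]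

lemma sy_herm {n : ℕ} (R a : ℝ) (G : Mat n) : (sy R a G).IsHermitian := by
  have : (sy R a G).transpose = sy R a G := by
    rw [sy, Matrix.transpose_sub, syA_symm]; simp
  rw [Matrix.IsHermitian, Matrix.conjTranspose_eq_transpose_of_trivial, this]

def PM {n : ℕ} (R a : ℝ) (G : Mat n) : MM n := Classical.choose (exists_pp (sy_herm R a G))
lemma PM_spec {n : ℕ} (R a : ℝ) (G : Mat n) : IsPP (sy R a G) (PM R a G) :=
  Classical.choose_spec (exists_pp (sy_herm R a G))

lemma sy_conj {n : ℕ} (R a : ℝ) {O : Mat n} (hO : IsOrth O) (G : Mat n) :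
    sy R a (conjM O G) = Matrix.of O * sy R a G * (Matrix.of O).transpose := by
  rw [sy, syA, conjP, sy, syA, Matrix.mul_sub, Matrix.sub_mul]
  congr 1
  · generalize Matrix.of O = P
    generalize Matrix.of G = Q
    rw [Matrix.mul_smul, Matrix.smul_mul, Matrix.mul_add, Matrix.add_mul, Matrix.transpose_mul,
      Matrix.transpose_mul, Matrix.transpose_transpose, Matrix.mul_assoc P Q.transpose]
  · have := hO.mul
    generalize Matrix.of O = P at *
    rw [Matrix.mul_smul, Matrix.smul_mul, Matrix.mul_one, this]

lemma PM_conj {n : ℕ} (R a : ℝ) {O : Mat n} (hO : IsOrth O) (G : Mat n) :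
    PM R a (conjM O G) = Matrix.of O * PM R a G * (Matrix.of O).transpose := by
  refine pp_unique (PM_spec R a _) ?_
  rw [sy_conj R a hO]
  exact pp_conj (PM_spec R a G) _ hO.mul'

lemma PM_symm {n : ℕ} (R a : ℝ) (G : Mat n) (i j) : PM R a G i j = PM R a G j i :=
  congrFun (congrFun (psd_symm (PM_spec R a G).1) j) i

lemma PM_cont {n : ℕ} (R a : ℝ) (i j : Fin n) : Continuous fun G : Mat n => PM R a G i j := by
  rw [continuous_iff_continuousAt]
  intro G0
  rw [ContinuousAt, tendsto_iff_norm_sub_tendsto_zero]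
  have hc : Continuous fun G : Mat n => √(fro (sy R a G - sy R a G0)) := by
    apply Real.continuous_sqrt.comp
    simp only [fro, sy, syA, Matrix.sub_apply, Matrix.smul_apply, Matrix.add_apply, Matrix.transpose_apply, Matrix.of_apply]
    fun_prop
  have h0 := hc.tendsto G0
  rw [sub_self] at h0
  have e : √(fro (0 : MM n)) = 0 := by simp [fro]
  rw [e] at h0
  refine squeeze_zero (fun _ => norm_nonneg _) (fun G => ?_) h0
  have h1 := pp_lip (PM_spec R a G) (PM_spec R a G0)
  apply Real.le_sqrt_of_sq_le
  rw [Real.norm_eq_abs, sq_abs]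
  refine le_trans ?_ h1
  refine le_trans ?_ (Finset.single_le_sum (f := fun i => ∑ j, (PM R a G - PM R a G0) i j ^ 2)
    (fun i _ => Finset.sum_nonneg fun j _ => sq_nonneg _) (Finset.mem_univ i))
  exact Finset.single_le_sum (f := fun j => (PM R a G - PM R a G0) i j ^ 2) (fun j _ => sq_nonneg _) (Finset.mem_univ j)

lemma fro_cont {n : ℕ} (R a : ℝ) : Continuous fun G : Mat n => fro (PM R a G) := by
  unfold fro
  exact continuous_finsetSum _ fun i _ => continuous_finsetSum _ fun j _ => (PM_cont R a i j).pow 2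

lemma fro_conj {n : ℕ} (R a : ℝ) {O : Mat n} (hO : IsOrth O) (G : Mat n) :
    fro (PM R a (conjM O G)) = fro (PM R a G) := by
  rw [fro_eq _ (psd_symm (PM_spec R a _).1), fro_eq _ (psd_symm (PM_spec R a _).1), PM_conj R a hO]
  have : Matrix.of O * PM R a G * (Matrix.of O).transpose * (Matrix.of O * PM R a G * (Matrix.of O).transpose)
    = Matrix.of O * PM R a G * ((Matrix.of O).transpose * Matrix.of O) * PM R a G * (Matrix.of O).transpose := by
    simp only [Matrix.mul_assoc]
  rw [this, hO.mul', Matrix.mul_one, Matrix.trace_mul_comm, ← Matrix.mul_assoc, ← Matrix.mul_assoc, hO.mul', Matrix.one_mul]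

lemma exists_rot45 {n : ℕ} (i j : Fin n) (hij : i ≠ j) : ∃ O : Mat n, IsOrth O ∧
    ∀ M : MM n, (∀ k l, M k l = M l k) →
      (Matrix.of O * M * (Matrix.of O).transpose) i j = (M i i - M j j) / 2 := by
  let p : Fin n → ℝ := fun k => (√2)⁻¹ * ((if k = i then 1 else 0) + (if k = j then 1 else 0))
  let q : Fin n → ℝ := fun k => (√2)⁻¹ * ((if k = i then 1 else 0) - (if k = j then 1 else 0))
  have h2 : (√2:ℝ)⁻¹ * (√2)⁻¹ = 1/2 := by
    rw [← mul_inv, Real.mul_self_sqrt (by norm_num)]; norm_num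
  have dp : ∀ x : Fin n → ℝ, dot p x = (√2)⁻¹ * (x i + x j) := by
    intro x
    simp only [dot, p, mul_assoc, ← Finset.mul_sum, add_mul, Finset.sum_add_distrib, ite_mul, one_mul, zero_mul]
    simp
  have dq : ∀ x : Fin n → ℝ, dot q x = (√2)⁻¹ * (x i - x j) := by
    intro x
    simp only [dot, q, mul_assoc, ← Finset.mul_sum, sub_mul, Finset.sum_sub_distrib, ite_mul, one_mul, zero_mul]
    simp
  have hji := hij.symm
  obtain ⟨O, hO, hOv⟩ := exists_orth {i, j} (fun k => if k = i then p else q) (by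
    intro k hk l hl
    rcases hk with rfl | hk <;> rcases hl with rfl | hl
    · simp [dp, p, hij, hji]; linarith
    · rw [Set.mem_singleton_iff] at hl; subst hl
      simp [dp, q, hij, hji]
    · rw [Set.mem_singleton_iff] at hk; subst hk
      simp [dq, p, hij, hji]
    · rw [Set.mem_singleton_iff] at hk hl; subst hk; subst hl
      simp [dq, q, hij, hji]; linarith)
  have hi : O i = p := by have := hOv i (by simp); simpa using this
  have hj : O j = q := by have := hOv j (by simp); simpa [hji] using this
  refine ⟨O, hO, fun M hM => ?_⟩
  have : (Matrix.of O * M * (Matrix.of O).transpose) i j = dot p (fun k => dot q (M k)) := by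
    rw [Matrix.mul_assoc, Matrix.mul_apply]
    simp only [Matrix.of_apply, hi, dot, Matrix.mul_apply, Matrix.transpose_apply, hj]
    refine Finset.sum_congr rfl fun k _ => ?_
    congr 1
    exact Finset.sum_congr rfl fun l _ => mul_comm _ _
  rw [this, dp, dq, dq, hM j i]
  linear_combination (M i i - M j j) * h2

lemma var_id {n : ℕ} (hn : 1 ≤ n) (x : Fin n → ℝ) :
    2 * n * ∑ i, (x i - (∑ k, x k)/n)^2 = ∑ i, ∑ j, (x i - x j)^2 := by
  have hn0 : (n:ℝ) ≠ 0 := by positivity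
  have h1 : ∀ i, (x i - (∑ k, x k)/n)^2 = x i^2 - 2 * ((∑ k, x k)/n) * x i + ((∑ k, x k)/n)^2 := fun i => by ring
  have h2 : ∀ i j, (x i - x j)^2 = x i^2 - 2 * (x i * x j) + x j^2 := fun i j => by ring
  simp_rw [h1, h2]
  simp only [Finset.sum_add_distrib, Finset.sum_sub_distrib, ← Finset.mul_sum, ← Finset.sum_mul]
  simp [← Finset.mul_sum]
  field_simp
  ring

def dev {n : ℕ} (M : MM n) : ℝ := ∑ i, (M i i - M.trace / n)^2

lemma conc {n : ℕ} (hn : 1 ≤ n) (R a δ : ℝ) (hδ : 0 < δ) :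
    nu n {G | fro (PM R a G) ≤ 9 * n ∧ δ * n < dev (PM R a G)} ≤ ENNReal.ofReal (18 / (δ * n)) := by
  let E : Set (Mat n) := {G | fro (PM R a G) ≤ 9 * n}
  have hE : MeasurableSet E := measurableSet_le (fro_cont R a).measurable measurable_const
  let h : Fin n → Fin n → Mat n → ℝ≥0∞ := fun i j => E.indicator fun G => ENNReal.ofReal ((PM R a G i i - PM R a G j j)^2)
  let k : Fin n → Fin n → Mat n → ℝ≥0∞ := fun i j => E.indicator fun G => ENNReal.ofReal (4 * (PM R a G i j)^2)
  have hm : ∀ i j, Measurable (h i j) := fun i j =>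
    (ENNReal.measurable_ofReal.comp ((((PM_cont R a i i).sub (PM_cont R a j j)).pow 2).measurable)).indicator hE
  have km : ∀ i j, Measurable (k i j) := fun i j =>
    (ENNReal.measurable_ofReal.comp ((((PM_cont R a i j).pow 2).const_mul 4).measurable)).indicator hE
  have hk : ∀ i j, ∫⁻ G, h i j G ∂(nu n) ≤ ∫⁻ G, k i j G ∂(nu n) := by
    intro i j
    by_cases hij : i = j
    · subst hij; simp [h]
    · obtain ⟨O, hO, hOM⟩ := exists_rot45 i j hij
      conv_rhs => rw [← nu_conj hO, lintegral_map (km i j) (continuous_conj O).measurable]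
      apply le_of_eq
      refine lintegral_congr fun G => ?_
      have hiff : conjM O G ∈ E ↔ G ∈ E := by
        change fro _ ≤ _ ↔ fro _ ≤ _
        rw [fro_conj R a hO]
      by_cases hG : G ∈ E
      · simp only [h, k, Set.indicator_of_mem hG, Set.indicator_of_mem (hiff.2 hG)]
        rw [PM_conj R a hO, hOM _ (PM_symm R a G)]
        congr 1; ring
      · simp only [h, k, Set.indicator_of_notMem hG, Set.indicator_of_notMem (fun hc => hG (hiff.1 hc))]
  have hsum : ∫⁻ G, ∑ i, ∑ j, h i j G ∂(nu n) ≤ ENNReal.ofReal (36 * n) := by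
    calc ∫⁻ G, ∑ i, ∑ j, h i j G ∂(nu n) = ∑ i, ∑ j, ∫⁻ G, h i j G ∂(nu n) := by
          rw [lintegral_finsetSum _ (fun i _ => Finset.measurable_sum _ fun j _ => hm i j)]
          exact Finset.sum_congr rfl fun i _ => lintegral_finsetSum _ (fun j _ => hm i j)
      _ ≤ ∑ i, ∑ j, ∫⁻ G, k i j G ∂(nu n) := Finset.sum_le_sum fun i _ => Finset.sum_le_sum fun j _ => hk i j
      _ = ∫⁻ G, ∑ i, ∑ j, k i j G ∂(nu n) := by
          rw [lintegral_finsetSum _ (fun i _ => Finset.measurable_sum _ fun j _ => km i j)]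
          exact Finset.sum_congr rfl fun i _ => (lintegral_finsetSum _ (fun j _ => km i j)).symm
      _ ≤ ∫⁻ G, ENNReal.ofReal (36 * n) ∂(nu n) := by
          refine lintegral_mono fun G => ?_
          by_cases hG : G ∈ E
          · simp only [k, Set.indicator_of_mem hG]
            have : ∀ i, ∑ j, ENNReal.ofReal (4 * (PM R a G i j)^2) = ENNReal.ofReal (∑ j, 4 * (PM R a G i j)^2) :=
              fun i => (ENNReal.ofReal_sum_of_nonneg fun j _ => by positivity).symm
            simp_rw [this]
            rw [← ENNReal.ofReal_sum_of_nonneg fun i _ => by positivity]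
            apply ENNReal.ofReal_le_ofReal
            simp_rw [← Finset.mul_sum]
            have : fro (PM R a G) ≤ 9 * n := hG
            rw [fro] at this
            linarith
          · simp only [k, Set.indicator_of_notMem hG]; simp
      _ = _ := by simp
  have hn0 : (0:ℝ) < n := by exact_mod_cast hn
  have hpos : 0 < 2 * n * (δ * n) := by positivity
  have hsub : {G | fro (PM R a G) ≤ 9 * n ∧ δ * n < dev (PM R a G)} ⊆
      {G | ENNReal.ofReal (2 * n * (δ * n)) ≤ ∑ i, ∑ j, h i j G} := by
    rintro G ⟨hG, hG2⟩
    have hG : G ∈ E := hG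
    change ENNReal.ofReal (2 * n * (δ * n)) ≤ ∑ i, ∑ j, h i j G
    simp only [h, Set.indicator_of_mem hG]
    have : ∀ i, ∑ j, ENNReal.ofReal ((PM R a G i i - PM R a G j j)^2) = ENNReal.ofReal (∑ j, (PM R a G i i - PM R a G j j)^2) :=
      fun i => (ENNReal.ofReal_sum_of_nonneg fun j _ => by positivity).symm
    simp_rw [this]
    rw [← ENNReal.ofReal_sum_of_nonneg fun i _ => by positivity]
    apply ENNReal.ofReal_le_ofReal
    rw [← var_id hn (fun i => PM R a G i i)]
    exact mul_le_mul_of_nonneg_left hG2.le (by positivity)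
  refine (measure_mono hsub).trans ?_
  refine (meas_ge_le_lintegral_div ((Finset.measurable_sum _ fun i _ => Finset.measurable_sum _ fun j _ => hm i j).aemeasurable) ?_ ENNReal.ofReal_ne_top).trans ?_
  · exact (ENNReal.ofReal_pos.2 hpos).ne'
  · refine (ENNReal.div_le_div_right hsum _).trans ?_
    rw [← ENNReal.ofReal_div_of_pos hpos]
    apply ENNReal.ofReal_le_ofReal
    apply le_of_eq; field_simp; norm_num


lemma psd_of_le {n : ℕ} {A : MM n} {c : ℝ} (hA : A.transpose = A)
    (hq : ∀ x, qf A x ≤ c * nsq x) : (c • (1 : MM n) - A).PosSemidef := by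
  refine .of_dotProduct_mulVec_nonneg ?_ fun x => ?_
  · ext i j
    have : A j i = A i j := congrFun (congrFun hA i) j
    simp [this, Matrix.one_apply, eq_comm]
  · have h1 : qf (c • (1 : MM n) - A : MM n) x = star x ⬝ᵥ ((c • (1 : MM n) - A).mulVec x) := qfP _ x
    rw [← h1, qf_sub', qf_one]
    linarith [hq x]

lemma ell_upper {n : ℕ} {A C : MM n} {c : ℝ} (hA : A.transpose = A)
    (hq : ∀ x, qf A x ≤ c * nsq x) (hC : C ∈ elliptope n) : (A * C).trace ≤ c * n := by
  have h1 := trace_mul_nonneg (psd_of_le hA hq) hC.1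
  have h2 : C.trace = n := by simp [Matrix.trace, hC.2]
  rw [Matrix.sub_mul, Matrix.trace_sub] at h1
  simp only [Matrix.smul_mul, Matrix.one_mul, Matrix.trace_smul, smul_eq_mul] at h1
  rw [h2] at h1
  linarith

lemma exists_near {n : ℕ} (hn : 1 ≤ n) (v : Fin n → ℝ) :
    ∃ w : Fin n → ℝ, nsq w = 1 ∧ nsq (w - v) ≤ (1 - nsq v)^2 := by
  by_cases hv : nsq v = 0
  · obtain ⟨k, rfl⟩ : ∃ k, n = k + 1 := ⟨n - 1, by omega⟩
    have h0 : v = 0 := by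
      ext i
      have := (Finset.sum_eq_zero_iff_of_nonneg (fun i _ => sq_nonneg (v i))).1 hv i (Finset.mem_univ _)
      simpa using this
    have h1 : nsq (e0 : Fin (k+1) → ℝ) = 1 := by rw [e0, nsq_cons]; simp [nsq]
    refine ⟨e0, h1, ?_⟩
    rw [hv, h0, sub_zero, h1]; norm_num
  · have hp : 0 < nsq v := lt_of_le_of_ne (nsq_nonneg v) (Ne.symm hv)
    have hs : √(nsq v) ^ 2 = nsq v := Real.sq_sqrt hp.le
    have hs0 : 0 < √(nsq v) := by positivity
    set y := √(nsq v) with hy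
    refine ⟨fun i => v i / y, ?_, ?_⟩
    · have : nsq (fun i => v i / y) = nsq v / y^2 := by
        simp only [nsq, div_pow, ← Finset.sum_div]
      rw [this, hs, div_self hv]
    · have : nsq ((fun i => v i / y) - v) = nsq v * (1/y - 1)^2 := by
        simp only [nsq, Finset.sum_mul, Pi.sub_apply]
        exact Finset.sum_congr rfl fun i _ => by ring
      rw [this, ← hs]
      have e : y^2 * (1/y - 1)^2 = (1 - y)^2 := by field_simp
      rw [e]
      have : (1 - y^2)^2 = (1-y)^2 * (1+y)^2 := by ring
      rw [this]
      nlinarith [mul_nonneg (sq_nonneg (1-y)) (by nlinarith : 0 ≤ (1+y)^2 - 1)]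

lemma qf_young {n : ℕ} {B : MM n} (hB : B.PosSemidef) {η : ℝ} (hη : 0 < η) (x z : Fin n → ℝ) :
    qf B (x + z) ≤ (1 + η) * qf B x + (1 + 1/η) * qf B z := by
  have h0 := psd_dot hB (η • x - z)
  have id : η * qf B (x + z) + qf B (η • x - z) = η * (1+η) * qf B x + (η + 1) * qf B z := by
    simp only [qf, Finset.mul_sum, ← Finset.sum_add_distrib, Pi.add_apply, Pi.sub_apply, Pi.smul_apply, smul_eq_mul]
    exact Finset.sum_congr rfl fun i _ => Finset.sum_congr rfl fun j _ => by ring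
  have h1 : η * qf B (x + z) ≤ η * ((1 + η) * qf B x + (1 + 1/η) * qf B z) := by
    have : η * ((1 + η) * qf B x + (1 + 1/η) * qf B z) = η * (1+η) * qf B x + (η + 1) * qf B z := by
      field_simp
    linarith
  exact le_of_mul_le_mul_left h1 hη

lemma trace_qf {n : ℕ} (A W : MM n) : (A * (W.transpose * W)).trace = ∑ k, qf A (W k) := by
  rw [← Matrix.mul_assoc, Matrix.trace_mul_comm]
  simp only [Matrix.trace, Matrix.diag, Matrix.mul_apply, Matrix.transpose_apply, qf]
  refine Finset.sum_congr rfl fun k _ => ?_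
  refine Finset.sum_congr rfl fun i _ => ?_
  rw [Finset.mul_sum]
  exact Finset.sum_congr rfl fun j _ => by ring

lemma sum_nsq {n : ℕ} (W : MM n) : ∑ k, nsq (W k) = ∑ i, nsq (fun k => W k i) := by
  simp only [nsq]; exact Finset.sum_comm

lemma ell_lower {n : ℕ} (hn : 1 ≤ n) {A M : MM n} {a δ η τ0 : ℝ} (hA : A.transpose = A)
    (hq : ∀ x, qf A x ≤ 3 * nsq x) (hq' : ∀ x, - (3 * nsq x) ≤ qf A x) (h : IsPP (A - a • 1) M)
    (hη : 0 < η) (hτ0 : 0 < τ0) (ht : τ0 * n ≤ M.trace) (hd : dev M ≤ δ * n) :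
    ∃ C ∈ elliptope n, a * n - η * (3 - a) * n - 6 * (1 + 1/η) * (δ * n / τ0^2) ≤ (A * C).trace := by
  have hn0 : (0:ℝ) < n := by exact_mod_cast hn
  obtain ⟨F, hF⟩ := factor h.1
  set τ := M.trace / n with hτ
  have hτ1 : τ0 ≤ τ := by rw [hτ, le_div_iff₀ hn0]; exact ht
  have hτp : 0 < τ := lt_of_lt_of_le hτ0 hτ1
  have hst : √τ ^ 2 = τ := Real.sq_sqrt hτp.le
  have hsp : 0 < √τ := Real.sqrt_pos.2 hτp
  let V : MM n := (√τ)⁻¹ • F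
  have hVV : V.transpose * V = τ⁻¹ • M := by
    simp only [V]
    rw [Matrix.transpose_smul, Matrix.smul_mul, Matrix.mul_smul, smul_smul, ← hF, ← mul_inv,
      ← sq, hst]
  have hcol : ∀ i, nsq (fun k => V k i) = M i i / τ := by
    intro i
    have := congrFun (congrFun hVV i) i
    rw [Matrix.mul_apply] at this
    simp only [Matrix.transpose_apply, Matrix.smul_apply, smul_eq_mul] at this
    simp only [nsq, sq]
    rw [this]; ring
  choose w hw1 hw2 using fun i => exists_near hn (fun k => V k i)
  let W : MM n := fun k i => w i k
  let Z : MM n := W - V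
  have hWZ : ∀ k, W k = V k + Z k := by
    intro k; ext i; simp [Z]
  have hZ : ∑ k, nsq (Z k) ≤ δ * n / τ0^2 := by
    rw [sum_nsq]
    have h1 : ∀ i, nsq (fun k => Z k i) ≤ (M i i - τ)^2 / τ^2 := by
      intro i
      have := hw2 i
      rw [hcol] at this
      refine le_trans this (le_of_eq ?_)
      field_simp; ring
    calc ∑ i, nsq (fun k => Z k i) ≤ ∑ i, (M i i - τ)^2 / τ^2 := Finset.sum_le_sum fun i _ => h1 i
      _ = dev M / τ^2 := by rw [← Finset.sum_div]; rfl
      _ ≤ (δ * n) / τ^2 := by gcongr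
      _ ≤ (δ * n) / τ0^2 := by
        have : 0 ≤ δ * n := le_trans (Finset.sum_nonneg fun i _ => sq_nonneg _) hd
        gcongr
  have hVn : ∑ k, nsq (V k) = n := by
    rw [sum_nsq]
    simp_rw [hcol]
    rw [← Finset.sum_div, div_eq_iff hτp.ne', hτ]
    have : ∑ i, M i i = M.trace := rfl
    rw [this]; field_simp
  have hWn : ∑ k, nsq (W k) = n := by
    rw [sum_nsq]
    have : ∀ i, nsq (fun k => W k i) = 1 := hw1
    simp [this]
  have hVA : a * n ≤ ∑ k, qf A (V k) := by
    rw [← trace_qf, hVV, Matrix.mul_smul, Matrix.trace_smul, pp_trace h, smul_eq_mul]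
    have h1 : M.trace = τ * n := by rw [hτ]; field_simp
    rw [h1]
    have := fro_nonneg M
    have e : τ⁻¹ * (a * (τ * n) + fro M) = a * n + τ⁻¹ * fro M := by field_simp
    rw [e]
    have : 0 ≤ τ⁻¹ * fro M := by positivity
    linarith
  have hpsd := psd_of_le hA hq
  have hg : ∀ x, qf ((3:ℝ) • (1 : MM n) - A : MM n) x = 3 * nsq x - qf A x := by
    intro x; rw [qf_sub', qf_one]
  refine ⟨W.transpose * W, ⟨Matrix.posSemidef_conjTranspose_mul_self W, fun i => ?_⟩, ?_⟩
  · have := hw1 i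
    rw [Matrix.mul_apply]
    simp only [nsq, sq] at this
    exact this
  · rw [trace_qf]
    have h1 : ∀ k, 3 * nsq (W k) - qf A (W k) ≤
        (1 + η) * (3 * nsq (V k) - qf A (V k)) + (1 + 1/η) * (6 * nsq (Z k)) := by
      intro k
      have := qf_young hpsd hη (V k) (Z k)
      rw [← hWZ, hg, hg, hg] at this
      refine this.trans ?_
      have h3 : 0 < 1 + 1/η := by positivity
      have := mul_le_mul_of_nonneg_left (by linarith [hq' (Z k)] : 3 * nsq (Z k) - qf A (Z k) ≤ 6 * nsq (Z k)) h3.le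
      linarith
    have h2 := Finset.sum_le_sum fun k (_ : k ∈ (Finset.univ : Finset (Fin n))) => h1 k
    simp only [Finset.sum_add_distrib, Finset.sum_sub_distrib, ← Finset.mul_sum] at h2
    rw [hVn, hWn] at h2
    have h3 : 0 < 1 + 1/η := by positivity
    have h4 := mul_le_mul_of_nonneg_left hZ h3.le
    have h5 := mul_le_mul_of_nonneg_left hVA (by positivity : 0 ≤ 1 + η)
    nlinarith

lemma qf_syA {n : ℕ} (R : ℝ) (G : Mat n) (x) : qf (syA R G) x = qf G x / R := by
  have h1 : qf (fun i j => G j i) x = qf G x := by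
    simp only [qf]
    rw [Finset.sum_comm]
    refine Finset.sum_congr rfl fun i _ => Finset.sum_congr rfl fun j _ => ?_
    ring
  have h2 : qf (syA R G) x = (1/(2*R)) * (qf G x + qf (fun i j => G j i) x) := by
    simp only [qf, Finset.mul_sum, ← Finset.sum_add_distrib]
    refine Finset.sum_congr rfl fun i _ => Finset.sum_congr rfl fun j _ => ?_
    have : syA R G i j = (1/(2*R)) * (G i j + G j i) := rfl
    rw [this]; ring
  rw [h2, h1]
  by_cases hR : R = 0
  · simp [hR]
  · field_simp; ring

lemma det_final {n : ℕ} (hn : 1 ≤ n) (R e c δ : ℝ) (hR : 0 < R) (he : 0 < e) (he1 : e ≤ 1) (hc : 0 < c)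
    (hδ : 6 * (1 + 1/(e/8)) * (δ / (e/2*c)^2) ≤ e/4) (G : Mat n)
    (h1 : ¬ Good 1 ((2+e)*R) G) (h2 : ¬ Good 1 ((2+e)*R) (-G))
    (h3 : ∃ m : ℕ, c * n ≤ m ∧ Good m ((2-e/2)*R) G)
    (h4 : ¬ (fro (PM R (2-e) G) ≤ 9 * n ∧ δ * n < dev (PM R (2-e) G))) :
    |(1 / (2 * (n:ℝ))) * sSup ((fun C => Matrix.trace (syA R G * C)) '' elliptope n) - 1| ≤ e := by
  have hn0 : (0:ℝ) < n := by exact_mod_cast hn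
  rw [good_one] at h1 h2
  push Not at h1 h2
  have hq : ∀ x, qf (syA R G) x ≤ (2+e) * nsq x := by
    intro x
    rw [qf_syA, div_le_iff₀ hR]; linarith [h1 x]
  have hneg : ∀ x, qf (-G) x = - qf G x := by intro x; simp [qf]
  have hq2 : ∀ x, - ((2+e) * nsq x) ≤ qf (syA R G) x := by
    intro x
    rw [qf_syA, le_div_iff₀ hR]
    have := h2 x
    rw [hneg] at this
    linarith
  have hA := syA_symm R G
  have hPP : IsPP (syA R G - (2-e) • 1) (PM R (2-e) G) := PM_spec R (2-e) G
  have hfro : fro (PM R (2-e) G) ≤ 9 * n := by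
    have := pp_fro hA hPP (c := 2+e) (by linarith) hq
    refine this.trans ?_
    apply mul_le_mul_of_nonneg_right _ hn0.le
    nlinarith
  have hdev : dev (PM R (2-e) G) ≤ δ * n := by
    by_contra hcon
    exact h4 ⟨hfro, not_le.1 hcon⟩
  obtain ⟨m, hm, L, hL⟩ := h3
  have hg : Good m ((2-e) + e/2) (syA R G) := by
    refine ⟨L, fun y hy => ?_⟩
    have := hL y hy
    rw [qf_syA, lt_div_iff₀ hR]
    linarith
  have htr := good_trace hPP hg
  obtain ⟨C, hC, hCt⟩ := ell_lower hn (η := e/8) (τ0 := e/2*c) (δ := δ) hA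
    (fun x => (hq x).trans (by nlinarith [nsq_nonneg x]))
    (fun x => le_trans (by nlinarith [nsq_nonneg x]) (hq2 x)) hPP (by positivity) (by positivity)
    (by nlinarith) hdev
  set S := (fun C => Matrix.trace (syA R G * C)) '' elliptope n with hS
  have hub : ∀ y ∈ S, y ≤ (2+e) * n := by
    rintro _ ⟨C, hC, rfl⟩
    exact ell_upper hA hq hC
  have hmem : (syA R G * C).trace ∈ S := ⟨C, hC, rfl⟩
  have hs1 : sSup S ≤ (2+e) * n := csSup_le ⟨_, hmem⟩ hub
  have hs2 : (syA R G * C).trace ≤ sSup S := le_csSup ⟨_, hub⟩ hmem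
  have hδ' : 6 * (1 + 1/(e/8)) * (δ * n / (e/2*c)^2) ≤ e/4 * n := by
    have := mul_le_mul_of_nonneg_right hδ hn0.le
    refine le_trans (le_of_eq ?_) this
    ring
  have hs3 : (2 - 2*e) * n ≤ sSup S := by nlinarith
  rw [abs_le]
  have e1 : (1 / (2 * (n:ℝ))) * sSup S = sSup S / (2 * n) := by ring
  rw [e1]
  constructor
  · rw [neg_le_sub_iff_le_add, ← sub_le_iff_le_add, le_div_iff₀ (by positivity)]
    linarith
  · rw [sub_le_iff_le_add, div_le_iff₀ (by positivity)]
    nlinarith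

/-- **The SDP value of the SK model** (Montanari–Sen): for `A_n ~ GOE(n)`,
`SDP_n(A_n) = (1/(2n)) max_{C ∈ ℰ_n} ⟨A_n, C⟩ → 1` in probability. -/
theorem sdp_value_goe {Ω : Type*} [MeasurableSpace Ω] (μ : Measure Ω)
    [IsProbabilityMeasure μ]
    (A : (n : ℕ) → Ω → Fin n → Fin n → ℝ)
    (hGOE : ∀ n, 1 ≤ n → IsGOE μ n (A n)) :
    ∀ ε : ℝ, 0 < ε →
      Tendsto (fun n : ℕ => μ {ω | ε <
          |(1 / (2 * (n : ℝ))) *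
              sSup ((fun C => Matrix.trace (Matrix.of (A n ω) * C)) '' elliptope n) - 1|})
        atTop (nhds 0) := by
  intro ε hε
  set e := min ε 1 with he
  have he0 : 0 < e := by positivity
  have he1 : e ≤ 1 := min_le_right _ _
  obtain ⟨c, hc, hlow⟩ := lower_nu (e/2) (by positivity) (by linarith)
  obtain ⟨δ, hδ0, hδ⟩ : ∃ δ : ℝ, 0 < δ ∧ 6 * (1 + 1/(e/8)) * (δ / (e/2*c)^2) ≤ e/4 := by
    refine ⟨e/4 * (e/2*c)^2 / (6 * (1 + 1/(e/8))), by positivity, le_of_eq ?_⟩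
    field_simp
  have hup := upper_nu e he0
  have hconc : Tendsto (fun n : ℕ => ENNReal.ofReal (18 / (δ * n))) atTop (nhds 0) := by
    have h1 : Tendsto (fun n : ℕ => 18 / (δ * (n:ℝ))) atTop (nhds 0) :=
      (tendsto_natCast_atTop_atTop.const_mul_atTop hδ0).const_div_atTop 18
    simpa using ENNReal.tendsto_ofReal h1
  have hsum := ((hup.add hup).add hlow).add hconc
  simp only [add_zero] at hsum
  refine tendsto_of_tendsto_of_tendsto_of_le_of_le' tendsto_const_nhds hsum
    (Eventually.of_forall fun _ => zero_le) ?_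
  filter_upwards [eventually_ge_atTop 1] with n hn
  have hR : 0 < √(n:ℝ) := Real.sqrt_pos.2 (by exact_mod_cast hn)
  have hG := hGOE n hn
  have hlaw := law_A μ n hn (A n) hG
  have hmeas : Measurable (fun ω => √(n:ℝ) • A n ω) := by
    refine measurable_pi_iff.2 fun i => measurable_pi_iff.2 fun j => ?_
    exact (hG.1 i j).const_mul _
  have hsy : ∀ ω, Matrix.of (A n ω) = syA √(n:ℝ) (√(n:ℝ) • A n ω) := by
    intro ω
    ext i j
    have hs := hG.2.1 ω i j
    simp only [syA, Matrix.smul_apply, Matrix.add_apply, Matrix.transpose_apply, Matrix.of_apply,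
      Pi.smul_apply, smul_eq_mul, ← hs]
    field_simp; ring
  set B1 : Set (Mat n) := {G | Good 1 ((2+e)*√n) G}
  set B2 : Set (Mat n) := {G | Good 1 ((2+e)*√n) (-G)}
  set B3 : Set (Mat n) := {G | ¬ ∃ m : ℕ, c * n ≤ m ∧ Good m ((2-e/2)*√n) G}
  set B4 : Set (Mat n) := {G | fro (PM √n (2-e) G) ≤ 9 * n ∧ δ * n < dev (PM √n (2-e) G)}
  have hB2 : nu n B2 = nu n B1 := by
    conv_rhs => rw [← nu_neg, Measure.map_apply measurable_neg (isOpen_good n 1 _).measurableSet]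
    rfl
  calc _ ≤ μ ((fun ω => √(n:ℝ) • A n ω) ⁻¹' (((B1 ∪ B2) ∪ B3) ∪ B4)) := by
        refine measure_mono fun ω hω => ?_
        by_contra hcon
        simp only [Set.mem_preimage, Set.mem_union, not_or] at hcon
        obtain ⟨⟨⟨n1, n2⟩, n3⟩, n4⟩ := hcon
        have := det_final hn √n e c δ hR he0 he1 hc hδ (√(n:ℝ) • A n ω) n1 n2 (not_not.1 n3) n4
        rw [← hsy] at this
        have h5 : ε < _ := hω
        linarith [min_le_left ε 1]
    _ ≤ (μ.map (fun ω => √(n:ℝ) • A n ω)) (((B1 ∪ B2) ∪ B3) ∪ B4) :=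
        Measure.le_map_apply hmeas.aemeasurable _
    _ = nu n (((B1 ∪ B2) ∪ B3) ∪ B4) := by rw [hlaw]
    _ ≤ nu n B1 + nu n B2 + nu n B3 + nu n B4 := by
        refine (measure_union_le _ _).trans (add_le_add ?_ le_rfl)
        refine (measure_union_le _ _).trans (add_le_add ?_ le_rfl)
        exact measure_union_le _ _
    _ ≤ _ := by
        rw [hB2]
        exact add_le_add le_rfl (conc hn _ _ δ hδ0)

end
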